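/- arXiv:math/0612664 — 3 statements merged into one kernel-verified Lean document; each statement's English description precedes it below -/
import Mathlib

section
/- Let F_q be a finite field with q elements and n ≥ 1. The number of unipotent matrices in GL_n(F_q), i.e. matrices g ∈ GL_n(F_q) with (g − 1)^n = 0, equals q^{n² − n}. -/
/-!
Subtracting `1` turns unipotent matrices into nilpotent endomorphisms of `Fⁿ`. These are counted
through a finer problem: if `v₀, …, v_m` are linearly independent in a space `V` of dimension
`n = m + 1 + d`, exactly `q ^ (n * d)` nilpotent `N` satisfy `N vᵢ = vᵢ₊₁` for all `i < m`. Let `W`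
be the span of the `vᵢ` and sort such `N` by the value `w = N v_m`.

* If `w = 0`, then `N` is a fixed nilpotent shift on `W`; relative to a complement `C` of `W` it is
  block triangular, with an arbitrary block `C → W` and a nilpotent block `C → C`. This gives
  `q ^ (d * (m + 1))` times the number of nilpotent endomorphisms of the `d`-dimensional space `C`,
  which is the same problem for a chain consisting of a single vector of `C`.
* If `0 ≠ w ∈ W`, there is no such `N`: it would preserve `W`, so `N ^ (m + 1)` would vanish there,
  yet it sends `v₀` to `w`.
* If `w ∉ W`, then `v₀, …, v_m, w` is a longer linearly independent chain.

A single vector of `C` and the chain `v₀, …, v_m, w` in `V` both span a subspace of codimension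
`d - 1`, so induction on `d` applies to both at once, and for `d ≥ 1` the total is
`q ^ (d * (m + 1)) * q ^ (d * (d - 1)) + (q ^ n - q ^ (m + 1)) * q ^ (n * (d - 1)) = q ^ (n * d)`.
-/

open Module Submodule

section Nilpotent

lemma pow_finrank_eq_zero_of_isNilpotent {R M : Type*} [CommRing R] [IsDomain R] [AddCommGroup M]
    [Module R M] [Module.Finite R M] [Free R M] {N : End R M} (hN : IsNilpotent N) :
    N ^ finrank R M = 0 := by
  simpa [hN.charpoly_eq_X_pow_finrank] using N.aeval_self_charpoly

lemma isNilpotent_matrix_iff_pow_card_eq_zero {R ι : Type*} [CommRing R] [IsDomain R] [Fintype ι]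
    [DecidableEq ι] {A : Matrix ι ι R} : IsNilpotent A ↔ A ^ Fintype.card ι = 0 := by
  refine ⟨fun hA => Matrix.toLinAlgEquiv'.injective ?_, fun hA => ⟨_, hA⟩⟩
  simpa using pow_finrank_eq_zero_of_isNilpotent (hA.map (Matrix.toLinAlgEquiv' (R := R)))

/-- The bijection `u ↦ u - 1` from the unipotent units of a ring to its nilpotent elements. -/
noncomputable def unipotentUnitsEquiv (R : Type*) [Ring R] :
    {u : Rˣ // IsNilpotent ((u : R) - 1)} ≃ {a : R // IsNilpotent a} where
  toFun u := ⟨u.1 - 1, u.2⟩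
  invFun a := ⟨a.2.isUnit_add_one.unit, by simpa using a.2⟩
  left_inv u := by ext; simp
  right_inv a := by ext; simp

variable {R U W C : Type*} [Semiring R] [AddCommMonoid U] [Module R U] [AddCommMonoid W]
  [Module R W] [AddCommMonoid C] [Module R C]

lemma isNilpotent_of_exact {f : W →ₗ[R] U} {g : U →ₗ[R] C} (hfg : Function.Exact f g)
    {N₀ : End R W} {N : End R U} {D : End R C} (hf : N ∘ₗ f = f ∘ₗ N₀) (hg : D ∘ₗ g = g ∘ₗ N)
    (hN₀ : IsNilpotent N₀) (hD : IsNilpotent D) : IsNilpotent N := by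
  obtain ⟨k, hk⟩ := hD
  obtain ⟨l, hl⟩ := hN₀
  refine ⟨l + k, LinearMap.ext fun x => ?_⟩
  have hgx : g ((N ^ k) x) = 0 := by
    simpa [hk] using (LinearMap.congr_fun (End.commute_pow_left_of_commute hg k) x).symm
  obtain ⟨y, hy⟩ := (hfg _).1 hgx
  have hfy : (N ^ l) (f y) = 0 := by
    simpa [hl] using LinearMap.congr_fun (End.commute_pow_left_of_commute hf l) y
  rw [pow_add, End.mul_apply, ← hy, hfy, LinearMap.zero_apply]

lemma isNilpotent_of_surjective {g : U →ₗ[R] C} (hg : Function.Surjective g) {N : End R U}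
    {D : End R C} (hND : D ∘ₗ g = g ∘ₗ N) (hN : IsNilpotent N) : IsNilpotent D := by
  obtain ⟨k, hk⟩ := hN
  refine ⟨k, (LinearMap.cancel_right hg).1 ?_⟩
  rw [End.commute_pow_left_of_commute hND, hk, LinearMap.comp_zero, LinearMap.zero_comp]

/-- The endomorphism of `W × C` with matrix `[[N₀, B], [0, D]]`, i.e. `(w, c) ↦ (N₀ w + B c, D c)`:
the general form of an endomorphism that restricts to `N₀` on `W`. -/
def blockTriangular (N₀ : End R W) (B : C →ₗ[R] W) (D : End R C) : End R (W × C) :=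
  (N₀.coprod B).prod (D ∘ₗ LinearMap.snd R W C)

lemma blockTriangular_comp_inl (N₀ : End R W) (B : C →ₗ[R] W) (D : End R C) :
    blockTriangular N₀ B D ∘ₗ LinearMap.inl R W C = LinearMap.inl R W C ∘ₗ N₀ := by
  ext <;> simp [blockTriangular]

lemma blockTriangular_eq_of_comp_inl {N₀ : End R W} {N : End R (W × C)}
    (hN : N ∘ₗ LinearMap.inl R W C = LinearMap.inl R W C ∘ₗ N₀) :
    blockTriangular N₀ (LinearMap.fst R W C ∘ₗ N ∘ₗ LinearMap.inr R W C)
      (LinearMap.snd R W C ∘ₗ N ∘ₗ LinearMap.inr R W C) = N := by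
  have hNw (w : W) : N (w, 0) = (N₀ w, 0) := LinearMap.congr_fun hN w
  ext <;> simp [blockTriangular, hNw]

lemma isNilpotent_blockTriangular_iff {N₀ : End R W} (hN₀ : IsNilpotent N₀) {B : C →ₗ[R] W}
    {D : End R C} : IsNilpotent (blockTriangular N₀ B D) ↔ IsNilpotent D :=
  have hsnd : D ∘ₗ LinearMap.snd R W C = LinearMap.snd R W C ∘ₗ blockTriangular N₀ B D := rfl
  ⟨isNilpotent_of_surjective LinearMap.snd_surjective hsnd,
    isNilpotent_of_exact .inl_snd (blockTriangular_comp_inl N₀ B D) hsnd hN₀⟩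

/-- The nilpotent endomorphisms of `W × C` restricting to a given nilpotent `N₀` on `W` are
parametrized by their blocks `C → W`, which is arbitrary, and `C → C`, which is nilpotent. -/
def nilpotentExtensionEquiv {N₀ : End R W} (hN₀ : IsNilpotent N₀) :
    {N : End R (W × C) // IsNilpotent N ∧ N ∘ₗ LinearMap.inl R W C = LinearMap.inl R W C ∘ₗ N₀} ≃
      (C →ₗ[R] W) × {D : End R C // IsNilpotent D} where
  toFun N := (LinearMap.fst R W C ∘ₗ N.1 ∘ₗ LinearMap.inr R W C,
    ⟨LinearMap.snd R W C ∘ₗ N.1 ∘ₗ LinearMap.inr R W C, (isNilpotent_blockTriangular_iff hN₀).1 <|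
      (blockTriangular_eq_of_comp_inl N.2.2).symm ▸ N.2.1⟩)
  invFun p := ⟨blockTriangular N₀ p.1 p.2,
    (isNilpotent_blockTriangular_iff hN₀).2 p.2.2, blockTriangular_comp_inl ..⟩
  left_inv N := Subtype.ext (blockTriangular_eq_of_comp_inl N.2.2)
  right_inv p := by ext <;> simp [blockTriangular]

end Nilpotent

lemma card_isNilpotent_extending {F V : Type*} [Field F] [AddCommGroup V] [Module F V]
    [FiniteDimensional F V] {W C : Submodule F V} (hWC : IsCompl W C) {N₀ : End F W}
    (hN₀ : IsNilpotent N₀) :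
    Nat.card {N : End F V // IsNilpotent N ∧ N ∘ₗ W.subtype = W.subtype ∘ₗ N₀} =
      Nat.card F ^ (finrank F C * finrank F W) * Nat.card {D : End F C // IsNilpotent D} := by
  let e : (W × C) ≃ₗ[F] V := W.prodEquivOfIsCompl C hWC
  have hinl : W.subtype = e.toLinearMap ∘ₗ LinearMap.inl F W C := by ext; simp [e]
  have hconj (N : End F (W × C)) :
      (IsNilpotent N ∧ N ∘ₗ LinearMap.inl F W C = LinearMap.inl F W C ∘ₗ N₀) ↔
        (IsNilpotent (e.conjAlgEquiv F N) ∧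
          e.conjAlgEquiv F N ∘ₗ W.subtype = W.subtype ∘ₗ N₀) := by
    refine and_congr (IsNilpotent.map_iff (e.conjAlgEquiv F).injective).symm ?_
    rw [hinl, LinearMap.comp_assoc, ← LinearMap.cancel_left e.injective]
    simp [LinearEquiv.conjAlgEquiv_apply, LinearMap.ext_iff]
  rw [← Nat.card_congr ((e.conjAlgEquiv F).toEquiv.subtypeEquiv hconj),
    Nat.card_congr (nilpotentExtensionEquiv hN₀), Nat.card_prod,
    Module.natCard_eq_pow_finrank (K := F), finrank_linearMap]

/-- `N` maps every term of the finite sequence `v₀, …, v_m` except the last one to its successor. -/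
def ShiftsAlong {R M : Type*} [Semiring R] [AddCommMonoid M] [Module R M] {m : ℕ} (N : End R M)
    (v : Fin (m + 1) → M) : Prop :=
  ∀ i : Fin m, N (v i.castSucc) = v i.succ

namespace ShiftsAlong

section Semiring

variable {R M : Type*} [Semiring R] [AddCommMonoid M] [Module R M] {m : ℕ} {N : End R M}
  {v : Fin (m + 1) → M}

lemma snoc_iff {w : M} : ShiftsAlong N (Fin.snoc v w : Fin (m + 1 + 1) → M) ↔
    ShiftsAlong N v ∧ N (v (Fin.last m)) = w := by
  simp only [ShiftsAlong, Fin.forall_fin_succ', Fin.succ_castSucc, Fin.succ_last,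
    Fin.snoc_castSucc, Fin.snoc_last]

lemma pow_apply_zero (h : ShiftsAlong N v) (i : Fin (m + 1)) : (N ^ (i : ℕ)) (v 0) = v i := by
  induction i using Fin.induction with
  | zero => simp
  | succ i ih => rw [Fin.val_succ, pow_succ', End.mul_apply, ← Fin.val_castSucc, ih, h i]

lemma pow_length_apply_zero (h : ShiftsAlong N v) : (N ^ (m + 1)) (v 0) = N (v (Fin.last m)) := by
  rw [pow_succ', End.mul_apply, ← h.pow_apply_zero (Fin.last m), Fin.val_last]

lemma isNilpotent_of_span_eq_top (h : ShiftsAlong N v) (hlast : N (v (Fin.last m)) = 0)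
    (hv : span R (Set.range v) = ⊤) : IsNilpotent N := by
  refine ⟨m + 1, LinearMap.ext_on_range hv fun i => ?_⟩
  rw [← h.pow_apply_zero i, ← End.mul_apply, ← pow_add, add_comm, pow_add, End.mul_apply,
    h.pow_length_apply_zero, hlast, map_zero, LinearMap.zero_apply]

end Semiring

variable {F V : Type*} [Field F] [AddCommGroup V] [Module F V] {m : ℕ} {v : Fin (m + 1) → V}
  {N : End F V}

lemma apply_last_eq_zero (h : ShiftsAlong N v) (hv : LinearIndependent F v) (hN : IsNilpotent N)
    (hlast : N (v (Fin.last m)) ∈ span F (Set.range v)) : N (v (Fin.last m)) = 0 := by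
  have hmaps : span F (Set.range v) ≤ (span F (Set.range v)).comap N := by
    rw [span_le, Set.range_subset_iff, Fin.forall_fin_succ']
    refine ⟨fun i => ?_, hlast⟩
    rw [SetLike.mem_coe, mem_comap, h i]
    exact subset_span (Set.mem_range_self i.succ)
  have : FiniteDimensional F (span F (Set.range v)) := .span_of_finite F (Set.finite_range v)
  have hpow := pow_finrank_eq_zero_of_isNilpotent (End.isNilpotent.restrict hmaps hN)
  rw [finrank_span_eq_card hv, Fintype.card_fin, End.pow_restrict] at hpow
  rw [← h.pow_length_apply_zero]
  simpa using congrArg Subtype.val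
    (LinearMap.congr_fun hpow ⟨v 0, subset_span (Set.mem_range_self 0)⟩)

end ShiftsAlong

section SpanShift

variable {R M : Type*} [Semiring R] [AddCommMonoid M] [Module R M] {m : ℕ} {v : Fin (m + 1) → M}

/-- The endomorphism `v₀ ↦ v₁ ↦ ⋯ ↦ v_m ↦ 0` of the span of a linearly independent family. -/
noncomputable def spanShift (hv : LinearIndependent R v) : End R (span R (Set.range v)) :=
  (Basis.span hv).constr ℕ (Fin.snoc (fun i : Fin m => Basis.span hv i.succ) 0)

lemma shiftsAlong_spanShift (hv : LinearIndependent R v) :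
    ShiftsAlong (spanShift hv) (Basis.span hv) := fun i => by
  rw [spanShift, Basis.constr_basis, Fin.snoc_castSucc]

lemma spanShift_last (hv : LinearIndependent R v) :
    spanShift hv (Basis.span hv (Fin.last m)) = 0 := by
  rw [spanShift, Basis.constr_basis, Fin.snoc_last]

lemma isNilpotent_spanShift (hv : LinearIndependent R v) : IsNilpotent (spanShift hv) :=
  (shiftsAlong_spanShift hv).isNilpotent_of_span_eq_top (spanShift_last hv) (Basis.span hv).span_eq

lemma comp_subtype_eq_spanShift_iff (hv : LinearIndependent R v) {N : End R M} :
    N ∘ₗ (span R (Set.range v)).subtype = (span R (Set.range v)).subtype ∘ₗ spanShift hv ↔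
      ShiftsAlong N v ∧ N (v (Fin.last m)) = 0 := by
  have hcoe (i : Fin (m + 1)) : (Basis.span hv i : M) = v i :=
    congrArg Subtype.val (Basis.span_apply hv i)
  calc N ∘ₗ (span R (Set.range v)).subtype = (span R (Set.range v)).subtype ∘ₗ spanShift hv
    _ ↔ ∀ i, N (Basis.span hv i) = (spanShift hv (Basis.span hv i) : M) :=
      ⟨fun h i => LinearMap.congr_fun h _, fun h => (Basis.span hv).ext h⟩
    _ ↔ ShiftsAlong N v ∧ N (v (Fin.last m)) = 0 := by
      simp only [Fin.forall_fin_succ', shiftsAlong_spanShift hv _, spanShift_last, hcoe,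
        ZeroMemClass.coe_zero, ShiftsAlong]

end SpanShift

/-- The nilpotent endomorphisms with `v₀ ↦ v₁ ↦ ⋯ ↦ v_m`. The image of `v_m` is not prescribed, so
for `m = 0` these are all the nilpotent endomorphisms. -/
def nilpotentShifts (R : Type*) {M : Type*} [Semiring R] [AddCommMonoid M] [Module R M] {m : ℕ}
    (v : Fin (m + 1) → M) : Set (End R M) :=
  {N | IsNilpotent N ∧ ShiftsAlong N v}

lemma card_nilpotentShifts_eq_sum {R M : Type*} [Semiring R] [AddCommMonoid M] [Module R M]
    [Fintype M] {m : ℕ} (v : Fin (m + 1) → M) :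
    Nat.card (nilpotentShifts R v) =
      ∑ w : M, Nat.card (nilpotentShifts R (Fin.snoc v w : Fin (m + 1 + 1) → M)) := by
  have : Finite (End R M) := DFunLike.finite _
  rw [← Nat.card_sigma, ← Nat.card_congr
    (Equiv.sigmaFiberEquiv fun N : nilpotentShifts R v => (N : End R M) (v (Fin.last m)))]
  refine Nat.card_congr (Equiv.sigmaCongrRight fun w => ?_)
  refine (Equiv.subtypeSubtypeEquivSubtypeInter (· ∈ nilpotentShifts R v)
    fun N => N (v (Fin.last m)) = w).trans (Equiv.subtypeEquivRight fun N => ?_)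
  simp only [nilpotentShifts, Set.mem_ofPred_eq, ShiftsAlong.snoc_iff, and_assoc]

section Count

variable {F V : Type*} [Field F] [AddCommGroup V] [Module F V] {m : ℕ} {v : Fin (m + 1) → V}

lemma nilpotentShifts_snoc_eq_empty (hv : LinearIndependent F v) {w : V} (hw : w ≠ 0)
    (hwv : w ∈ span F (Set.range v)) :
    nilpotentShifts F (Fin.snoc v w : Fin (m + 1 + 1) → V) = ∅ := by
  rw [Set.eq_empty_iff_forall_notMem]
  rintro N ⟨hN, hsnoc⟩
  obtain ⟨hshift, hlast⟩ := ShiftsAlong.snoc_iff.1 hsnoc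
  exact hw (hlast ▸ hshift.apply_last_eq_zero hv hN (hlast ▸ hwv))

lemma card_nilpotentShifts_snoc_zero [FiniteDimensional F V] (hv : LinearIndependent F v)
    {C : Submodule F V} (hC : IsCompl (span F (Set.range v)) C) :
    Nat.card (nilpotentShifts F (Fin.snoc v 0 : Fin (m + 1 + 1) → V)) =
      Nat.card F ^ (finrank F C * (m + 1)) * Nat.card {D : End F C // IsNilpotent D} := by
  have h := card_isNilpotent_extending hC (isNilpotent_spanShift hv)
  simp only [comp_subtype_eq_spanShift_iff, ← ShiftsAlong.snoc_iff, finrank_span_eq_card hv,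
    Fintype.card_fin] at h
  exact h

lemma exists_linearIndependent_nilpotentShifts_eq [Nontrivial V] :
    ∃ v : Fin (0 + 1) → V, LinearIndependent F v ∧ nilpotentShifts F v = {N | IsNilpotent N} := by
  obtain ⟨x, hx⟩ := exists_ne (0 : V)
  refine ⟨fun _ => x, (linearIndependent_unique_iff (ι := Fin 1)).2 hx, ?_⟩
  ext N
  simp [nilpotentShifts, ShiftsAlong]

variable [Finite F] [FiniteDimensional F V]

lemma card_notMem_submodule (W : Submodule F V) :
    Nat.card {w : V // w ∉ W} = Nat.card F ^ finrank F V - Nat.card F ^ finrank F W := by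
  classical
  have : Finite V := Module.finite_of_finite F
  have := Fintype.ofFinite V
  rw [← Module.natCard_eq_pow_finrank, ← Module.natCard_eq_pow_finrank, Nat.card_eq_fintype_card,
    Fintype.card_subtype_compl, ← Nat.card_eq_fintype_card, ← Nat.card_eq_fintype_card]

lemma card_nilpotentShifts_eq_add_mul (hv : LinearIndependent F v) {k : ℕ}
    (hk : ∀ w ∉ span F (Set.range v),
      Nat.card (nilpotentShifts F (Fin.snoc v w : Fin (m + 1 + 1) → V)) = k) :
    Nat.card (nilpotentShifts F v) =
      Nat.card (nilpotentShifts F (Fin.snoc v 0 : Fin (m + 1 + 1) → V)) +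
        (Nat.card F ^ finrank F V - Nat.card F ^ (m + 1)) * k := by
  classical
  have : Finite V := Module.finite_of_finite F
  have := Fintype.ofFinite V
  let W := span F (Set.range v)
  let c (w : V) : ℕ := Nat.card (nilpotentShifts F (Fin.snoc v w : Fin (m + 1 + 1) → V))
  have hmem : ∑ w : {w // w ∈ W}, c w = c 0 := by
    refine Fintype.sum_eq_single (0 : W) fun w hw => ?_
    simp only [c]
    rw [nilpotentShifts_snoc_eq_empty hv (by simpa using hw) w.2, Nat.card_of_isEmpty]
  have hnotMem : ∑ w : {w // w ∉ W}, c w =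
      (Nat.card F ^ finrank F V - Nat.card F ^ (m + 1)) * k := by
    rw [Fintype.sum_congr _ _ fun w : {w // w ∉ W} => hk w w.2, Finset.sum_const,
      Finset.card_univ, ← Nat.card_eq_fintype_card, card_notMem_submodule,
      finrank_span_eq_card hv, Fintype.card_fin, smul_eq_mul]
  rw [card_nilpotentShifts_eq_sum, ← Fintype.sum_subtype_add_sum_subtype (· ∈ W), hmem, hnotMem]

end Count

theorem card_nilpotentShifts {F : Type*} [Field F] [Finite F] (d : ℕ) :
    ∀ {V : Type*} [AddCommGroup V] [Module F V] [FiniteDimensional F V] {m : ℕ}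
      {v : Fin (m + 1) → V}, LinearIndependent F v → finrank F V = m + 1 + d →
      Nat.card (nilpotentShifts F v) = Nat.card F ^ (finrank F V * d) := by
  induction d with
  | zero =>
    intro V _ _ _ m v hv hV
    have hspan : span F (Set.range v) = ⊤ := hv.span_eq_top_of_card_eq_finrank (by simp [hV])
    rw [card_nilpotentShifts_eq_add_mul hv (k := 0) (by simp [hspan]),
      card_nilpotentShifts_snoc_zero hv (hspan ▸ isCompl_top_bot)]
    simp
  | succ d ih =>
    intro V _ _ _ m v hv hV
    obtain ⟨C, hC⟩ := Submodule.exists_isCompl (span F (Set.range v))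
    have hCd : finrank F C = d + 1 := by
      have := finrank_add_eq_of_isCompl hC
      rw [finrank_span_eq_card hv, Fintype.card_fin] at this
      omega
    have hcardC : Nat.card {D : End F C // IsNilpotent D} = Nat.card F ^ ((d + 1) * d) := by
      have : Nontrivial C := nontrivial_of_finrank_pos (R := F) (by omega)
      obtain ⟨u, hu, hnil⟩ := exists_linearIndependent_nilpotentShifts_eq (F := F) (V := C)
      have := ih hu (by omega)
      rwa [hnil, hCd] at this
    have hsnoc (w : V) (hw : w ∉ span F (Set.range v)) :
        Nat.card (nilpotentShifts F (Fin.snoc v w : Fin (m + 1 + 1) → V)) =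
          Nat.card F ^ (finrank F V * d) :=
      ih (linearIndependent_finSnoc.2 ⟨hv, hw⟩) (by omega)
    have hle : Nat.card F ^ (m + 1) ≤ Nat.card F ^ (m + 1 + (d + 1)) :=
      Nat.pow_le_pow_right Nat.card_pos (by omega)
    rw [card_nilpotentShifts_eq_add_mul hv hsnoc, card_nilpotentShifts_snoc_zero hv hC, hcardC, hCd,
      hV]
    zify [hle]
    ring

theorem card_isNilpotent_end {F V : Type*} [Field F] [Finite F] [AddCommGroup V] [Module F V]
    [FiniteDimensional F V] :
    Nat.card {N : End F V // IsNilpotent N} = Nat.card F ^ (finrank F V * (finrank F V - 1)) := by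
  rcases subsingleton_or_nontrivial V with hV | hV
  · simp [finrank_zero_of_subsingleton]
  · obtain ⟨v, hv, hnil⟩ := exists_linearIndependent_nilpotentShifts_eq (F := F) (V := V)
    have hpos : 0 < finrank F V := finrank_pos
    rw [← card_nilpotentShifts (finrank F V - 1) hv (by omega), hnil]
    rfl

theorem card_isNilpotent_matrix {F ι : Type*} [Field F] [Finite F] [Fintype ι] [DecidableEq ι] :
    Nat.card {A : Matrix ι ι F // IsNilpotent A} =
      Nat.card F ^ (Fintype.card ι * (Fintype.card ι - 1)) := by
  let e : Matrix ι ι F ≃ₐ[F] End F (ι → F) := Matrix.toLinAlgEquiv'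
  rw [Nat.card_congr (e.toEquiv.subtypeEquiv fun A => (IsNilpotent.map_iff e.injective).symm),
    card_isNilpotent_end, finrank_fintype_fun_eq_card]

/-- **The number of unipotent matrices in `GL_n(F_q)` is `q^{n² - n}`** (Steinberg): the
number of `g ∈ GL_n(F_q)` with `(g - 1)^n = 0` equals `q^{n² - n}`. -/
theorem card_unipotent (F : Type*) [Field F] [Fintype F] (q : ℕ)
    (hq : Fintype.card F = q) (n : ℕ) (hn : 1 ≤ n) :
    Nat.card {g : Matrix.GeneralLinearGroup (Fin n) F |
        ((g : Matrix (Fin n) (Fin n) F) - 1) ^ n = 0} = q ^ (n ^ 2 - n) := by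
  have hpow (g : Matrix.GeneralLinearGroup (Fin n) F) :
      ((g : Matrix (Fin n) (Fin n) F) - 1) ^ n = 0 ↔
        IsNilpotent ((g : Matrix (Fin n) (Fin n) F) - 1) := by
    rw [isNilpotent_matrix_iff_pow_card_eq_zero, Fintype.card_fin]
  calc Nat.card {g : Matrix.GeneralLinearGroup (Fin n) F |
        ((g : Matrix (Fin n) (Fin n) F) - 1) ^ n = 0}
    _ = Nat.card {A : Matrix (Fin n) (Fin n) F // IsNilpotent A} :=
      Nat.card_congr ((Equiv.subtypeEquivRight hpow).trans (unipotentUnitsEquiv _))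
    _ = q ^ (n * (n - 1)) := by
      rw [card_isNilpotent_matrix, Fintype.card_fin, Nat.card_eq_fintype_card, hq]
    _ = q ^ (n ^ 2 - n) := by rw [Nat.mul_sub_one, sq]
end

section
/- Let F_q be a finite field with q elements, let K be an algebraic closure of F_q, and let n ≥ 1. The number of conjugacy classes of GL_n(F_q) equals the number of functions Λ from K^× (the nonzero elements of K) to the set of partitions of nonnegative integers such that Λ(x) is the empty partition for all but finitely many x, Λ(x^q) = Λ(x) for every x ∈ K^×, and ∑_{x ∈ K^×} |Λ(x)| = n. -/
/-!
A matrix `g ∈ GL_n(F)` turns `F^n` into an `F[X]`-module on which `X` acts as `g`, and conjugate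
matrices are those with isomorphic modules. The modules that arise are the torsion modules of
`F`-dimension `n` on which `X` acts injectively, that is, the direct sums of cyclic modules
`F[X] / (p ^ e)` with `p ≠ X` monic irreducible, `e ≥ 1` and `∑ e * deg p = n`. The multiset of the
pairs `(p, e)` is an invariant of the module `M`: the length of `F[X] / (p ^ k) ⊗ M` is the sum of
`min k e` over the pairs with first entry `p`, and the second differences of this sum in `k` are the
multiplicities of the pairs `(p, k)`. Such a multiset assigns to each `p` a partition, formed by the
exponents `e` that occur with `p`.

Over a perfect field, pulling back along the map `K^× → {p}` that sends `x` to its minimal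
polynomial gives a partition-valued function on `K^×`. The fibre over `p` is a Galois orbit with
`deg p` elements, so the functions obtained are the Galois-invariant ones, and `∑ e * deg p` becomes
the total size. Over a finite field, every Galois conjugate of `x` is `x ^ (q ^ k)` for some `k`, so
Galois invariance means invariance under `x ↦ x ^ q`.
-/

namespace GLClasses

open Polynomial TensorProduct

section PID

universe u

theorem sum_min_add_card_filter_eq {ι : Type*} (s : Finset ι) (e : ι → ℕ) (k : ℕ) :
    ∑ i ∈ s, min k (e i) + ∑ i ∈ s, min (k + 2) (e i) + (s.filter fun i => e i = k + 1).card =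
      2 * ∑ i ∈ s, min (k + 1) (e i) := by
  rw [Finset.card_filter, Finset.mul_sum, ← Finset.sum_add_distrib, ← Finset.sum_add_distrib]
  refine Finset.sum_congr rfl fun i _ => ?_
  split_ifs <;> omega

variable {R : Type u} [CommRing R]

/-- The isomorphism `R / I ⊗ R / J ≃ R / (I + J)`, with the sum in the order in which the iterated
quotient `(R / J) / I` produces it. -/
noncomputable def quotTensorQuotEquivQuotSup (I J : Ideal R) :
    ((R ⧸ I) ⊗[R] (R ⧸ J)) ≃ₗ[R] R ⧸ (J ⊔ I) :=
  TensorProduct.quotTensorEquivQuotSMul (R ⧸ J) I ≪≫ₗ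
    Submodule.quotEquivOfEq _ _ (by
      rw [← Submodule.range_mkQ J, ← Submodule.map_top, ← Submodule.map_smul'', smul_eq_mul,
        Ideal.mul_top]) ≪≫ₗ
    Submodule.quotientQuotientEquivQuotientSup J I

/-- Restriction to the indices satisfying `s`, as an isomorphism of products when all the other
factors are trivial. -/
noncomputable def piSubtypeEquivOfSubsingleton {ι : Type*} (M : ι → Type*)
    [∀ i, AddCommGroup (M i)] [∀ i, Module R (M i)] (s : ι → Prop)
    (h : ∀ i, ¬s i → Subsingleton (M i)) : (∀ i, M i) ≃ₗ[R] ∀ i : {i // s i}, M i :=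
  LinearEquiv.ofBijective (LinearMap.pi fun i => LinearMap.proj i.1) <| by
    classical
    refine ⟨fun a b hab => funext fun i => ?_, fun b => ?_⟩
    · by_cases hi : s i
      · exact congrFun hab ⟨i, hi⟩
      · exact (h i hi).elim _ _
    · exact ⟨fun i => if hi : s i then b ⟨i, hi⟩ else 0, funext fun i => by simp [i.2]⟩

theorem smul_mk_span_eq_zero_iff (f a b : R) :
    a • Ideal.Quotient.mk (Ideal.span {f}) b = 0 ↔ f ∣ a * b := by
  rw [← Ideal.mem_span_singleton, ← Ideal.Quotient.eq_zero_iff_mem]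
  rfl

theorem isSMulRegular_quot_span_of_isCoprime {a f : R} (h : IsCoprime a f) :
    IsSMulRegular (R ⧸ Ideal.span {f}) a := by
  rw [isSMulRegular_iff_right_eq_zero_of_smul]
  intro m hm
  obtain ⟨b, rfl⟩ := Ideal.Quotient.mk_surjective m
  rw [smul_mk_span_eq_zero_iff] at hm
  rw [Ideal.Quotient.eq_zero_iff_mem, Ideal.mem_span_singleton]
  exact h.symm.dvd_of_dvd_mul_left hm

theorem not_dvd_of_isSMulRegular_quot_span_pow [IsDomain R] {a p : R} {e : ℕ} (hp : Irreducible p)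
    (he : e ≠ 0) (h : IsSMulRegular (R ⧸ Ideal.span {p ^ e}) a) : ¬p ∣ a := by
  intro hpa
  obtain ⟨k, rfl⟩ := Nat.exists_eq_succ_of_ne_zero he
  have hmem : p ^ (k + 1) ∣ a * p ^ k := pow_succ' p k ▸ mul_dvd_mul_right hpa _
  have hzero := h.right_eq_zero_of_smul ((smul_mk_span_eq_zero_iff _ _ _).2 hmem)
  rw [Ideal.Quotient.eq_zero_iff_mem, Ideal.mem_span_singleton,
    pow_dvd_pow_iff hp.ne_zero hp.not_isUnit] at hzero
  omega

variable [IsDomain R] [IsPrincipalIdealRing R]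

theorem length_quot_span_pow {p : R} (hp : Irreducible p) (e : ℕ) :
    Module.length R (R ⧸ Ideal.span {p ^ e}) = e := by
  have h := Ring.ord_pow (mem_nonZeroDivisors_of_ne_zero hp.ne_zero) e
  rwa [Ring.ord_of_irreducible hp, nsmul_one] at h

open Classical in
theorem length_quot_span_pow_tensor {p q : R} (hp : Irreducible p) (hq : Irreducible q)
    (e k : ℕ) :
    Module.length R ((R ⧸ Ideal.span {q ^ k}) ⊗[R] (R ⧸ Ideal.span {p ^ e})) =
      if Associated p q then ↑(min k e) else 0 := by
  rw [(quotTensorQuotEquivQuotSup _ _).length_eq]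
  split_ifs with hpq
  · have hspan : Ideal.span {p ^ e} ⊔ Ideal.span {q ^ k} = Ideal.span {p ^ min k e} := by
      rw [Ideal.span_singleton_eq_span_singleton.2 hpq.symm.pow_pow]
      rcases le_total k e with h | h
      · rw [min_eq_left h, sup_eq_right, Ideal.span_singleton_le_span_singleton]
        exact pow_dvd_pow p h
      · rw [min_eq_right h, sup_eq_left, Ideal.span_singleton_le_span_singleton]
        exact pow_dvd_pow p h
    rw [hspan, length_quot_span_pow hp]
  · have hcop : IsCoprime p q :=
      hp.coprime_iff_not_dvd.2 fun h => hpq (hp.associated_of_dvd hq h)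
    rw [Module.length_eq_zero_iff, Submodule.Quotient.subsingleton_iff,
      ← Ideal.isCoprime_iff_sup_eq, Ideal.isCoprime_span_singleton_iff]
    exact hcop.pow

open Classical in
theorem length_quot_span_pow_tensor_pi {ι : Type*} [Fintype ι] {p : ι → R}
    (hp : ∀ i, Irreducible (p i)) (e : ι → ℕ) {q : R} (hq : Irreducible q) (k : ℕ) :
    Module.length R ((R ⧸ Ideal.span {q ^ k}) ⊗[R] (∀ i, R ⧸ Ideal.span {p i ^ e i})) =
      ↑(∑ i with Associated (p i) q, min k (e i)) := by
  rw [(TensorProduct.piRight R R _ _).length_eq, Module.length_pi_of_fintype, Finset.sum_filter,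
    Nat.cast_sum]
  refine Finset.sum_congr rfl fun i _ => ?_
  rw [length_quot_span_pow_tensor (hp i) hq]
  split_ifs <;> simp

open Classical in
theorem card_filter_eq_of_pi_quot_equiv {ι κ : Type*} [Fintype ι] [Fintype κ]
    {p : ι → R} {p' : κ → R} (hp : ∀ i, Irreducible (p i)) (hp' : ∀ j, Irreducible (p' j))
    {e : ι → ℕ} {e' : κ → ℕ}
    (φ : (∀ i, R ⧸ Ideal.span {p i ^ e i}) ≃ₗ[R] ∀ j, R ⧸ Ideal.span {p' j ^ e' j})
    {q : R} (hq : Irreducible q) {k : ℕ} (hk : k ≠ 0) :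
    (Finset.univ.filter fun i => Associated (p i) q ∧ e i = k).card =
      (Finset.univ.filter fun j => Associated (p' j) q ∧ e' j = k).card := by
  have hmin (l : ℕ) : ∑ i with Associated (p i) q, min l (e i) =
      ∑ j with Associated (p' j) q, min l (e' j) := by
    have h := (LinearEquiv.lTensor (R ⧸ Ideal.span {q ^ l}) φ).length_eq
    rw [length_quot_span_pow_tensor_pi hp e hq, length_quot_span_pow_tensor_pi hp' e' hq] at h
    exact_mod_cast h
  obtain ⟨l, rfl⟩ := Nat.exists_eq_succ_of_ne_zero hk
  have hdiff := sum_min_add_card_filter_eq (Finset.univ.filter fun i => Associated (p i) q) e l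
  have hdiff' := sum_min_add_card_filter_eq (Finset.univ.filter fun j => Associated (p' j) q) e' l
  rw [Finset.filter_filter, hmin, hmin, hmin] at hdiff
  rw [Finset.filter_filter] at hdiff'
  simp only [Nat.succ_eq_add_one]
  omega

theorem exists_pi_quot_equiv_of_isTorsion {M : Type*} [AddCommGroup M] [Module R M]
    [Module.Finite R M] (hM : Module.IsTorsion R M) :
    ∃ (ι : Type u) (_ : Fintype ι) (p : ι → R) (e : ι → ℕ), (∀ i, Irreducible (p i)) ∧
      (∀ i, e i ≠ 0) ∧ Nonempty (M ≃ₗ[R] ∀ i, R ⧸ Ideal.span {p i ^ e i}) := by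
  classical
  obtain ⟨ι, _, p, hp, e, ⟨φ⟩⟩ := Module.equiv_directSum_of_isTorsion hM
  have hsub : ∀ i, ¬e i ≠ 0 → Subsingleton (R ⧸ Ideal.span {p i ^ e i}) := fun i hi => by
    rw [Submodule.Quotient.subsingleton_iff, not_not.1 hi, pow_zero, Ideal.span_singleton_one]
  exact ⟨{i // e i ≠ 0}, inferInstance, fun i => p i, fun i => e i, fun i => hp i, fun i => i.2,
    ⟨φ ≪≫ₗ DirectSum.linearEquivFunOnFintype R ι _ ≪≫ₗ
      piSubtypeEquivOfSubsingleton _ _ hsub⟩⟩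

end PID

section ElementaryDivisors

variable {F : Type*} [Field F]

variable (F) in
/-- A monic irreducible polynomial over `F` other than `X`, that is, the minimal polynomial of a
nonzero algebraic element. -/
@[ext]
structure PrimePoly where
  poly : F[X]
  monic : poly.Monic
  irreducible : Irreducible poly
  ne_X : poly ≠ X

variable (F) in
/-- The elementary divisors of a finite torsion `F[X]`-module on which `X` acts injectively: a pair
`(p, e)` stands for a cyclic summand `F[X] / (p ^ e)`. -/
abbrev ElemDivisors := Multiset (PrimePoly F × ℕ+)

/-- The `F`-dimension of the module with elementary divisors `s`. -/
noncomputable def weight (s : ElemDivisors F) : ℕ :=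
  (s.map fun d => (d.2 : ℕ) * d.1.poly.natDegree).sum

/-- The cyclic module `F[X] / (p ^ e)` attached to the pair `(p, e)`. -/
abbrev Cyclic (d : PrimePoly F × ℕ+) := F[X] ⧸ Ideal.span {d.1.poly ^ (d.2 : ℕ)}

open Classical in
/-- The standard `F[X]`-module with elementary divisors `s`, realized as a product over the elements
of `s` counted with multiplicity. -/
abbrev CyclicSum (s : ElemDivisors F) := ∀ d : s, Cyclic (d : PrimePoly F × ℕ+)

theorem PrimePoly.associated_iff {p q : PrimePoly F} : Associated p.poly q.poly ↔ p = q :=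
  ⟨fun h => PrimePoly.ext (eq_of_monic_of_associated p.monic q.monic h), fun h => h ▸ .refl _⟩

theorem PrimePoly.isCoprime_X (p : PrimePoly F) : IsCoprime X p.poly :=
  irreducible_X.coprime_iff_not_dvd.2 fun h =>
    p.ne_X (eq_of_monic_of_associated p.monic monic_X
      (irreducible_X.associated_of_dvd p.irreducible h).symm)

instance finite_cyclic (d : PrimePoly F × ℕ+) : Module.Finite F (Cyclic d) :=
  (AdjoinRoot.powerBasis (pow_ne_zero _ d.1.monic.ne_zero)).finite

theorem finrank_cyclicSum (s : ElemDivisors F) : Module.finrank F (CyclicSum s) = weight s := by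
  classical
  rw [Module.finrank_pi_fintype, weight, ← Multiset.map_univ s, Finset.sum_eq_multiset_sum]
  refine congrArg Multiset.sum (Multiset.map_congr rfl fun d _ => ?_)
  rw [finrank_quotient_span_eq_natDegree, natDegree_pow]

theorem isSMulRegular_X_cyclicSum (s : ElemDivisors F) :
    IsSMulRegular (CyclicSum s) (X : F[X]) :=
  Pi.isSMulRegular_iff.2 fun d =>
    isSMulRegular_quot_span_of_isCoprime d.1.1.isCoprime_X.pow_right

theorem card_filter_coe_eq_count {α : Type*} [DecidableEq α] (s : Multiset α) (a : α) :
    (Finset.univ.filter fun i : s => (i : α) = a).card = s.count a := by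
  conv_rhs => rw [← Multiset.map_univ_coe s, Multiset.count_map]
  simp only [eq_comm]
  rfl

theorem eq_of_cyclicSum_equiv {s t : ElemDivisors F} (φ : CyclicSum s ≃ₗ[F[X]] CyclicSum t) :
    s = t := by
  classical
  ext ⟨p, e⟩
  have hcard := card_filter_eq_of_pi_quot_equiv (fun i : s => i.1.1.irreducible)
    (fun i : t => i.1.1.irreducible) φ p.irreducible e.ne_zero
  simp only [PrimePoly.associated_iff, PNat.coe_inj, ← Prod.mk_inj] at hcard
  rwa [← card_filter_coe_eq_count, ← card_filter_coe_eq_count]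

theorem exists_equiv_comp_eq_of_map_univ_eq {ι κ D : Type*} [Fintype ι] [Fintype κ] {f : ι → D}
    {g : κ → D} (h : Finset.univ.val.map f = Finset.univ.val.map g) :
    ∃ σ : ι ≃ κ, g ∘ σ = f := by
  classical
  have hfib (c : D) : Nonempty ({a // f a = c} ≃ {b // g b = c}) := by
    rw [← Fintype.card_eq, Fintype.card_subtype, Fintype.card_subtype]
    have hcount := congrArg (Multiset.count c) h
    rw [Multiset.count_map, Multiset.count_map] at hcount
    simpa [Finset.card, eq_comm] using hcount
  exact ⟨Equiv.ofFiberEquiv fun c => (hfib c).some, funext (Equiv.ofFiberEquiv_map _)⟩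

theorem nonempty_pi_cyclic_equiv_cyclicSum {ι : Type*} [Fintype ι] (f : ι → PrimePoly F × ℕ+) :
    Nonempty ((∀ i, Cyclic (f i)) ≃ₗ[F[X]] CyclicSum (Finset.univ.val.map f)) := by
  classical
  obtain ⟨σ, hσ⟩ := exists_equiv_comp_eq_of_map_univ_eq
    (Multiset.map_univ_coe (Finset.univ.val.map f)).symm
  generalize Finset.univ.val.map f = s at σ hσ
  subst hσ
  exact ⟨LinearEquiv.piCongrLeft F[X] (fun d : s => Cyclic d.1) σ⟩

theorem exists_equiv_cyclicSum {M : Type*} [AddCommGroup M] [Module F[X] M] [Module.Finite F[X] M]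
    (hM : Module.IsTorsion F[X] M) (hX : IsSMulRegular M (X : F[X])) :
    ∃ s : ElemDivisors F, Nonempty (M ≃ₗ[F[X]] CyclicSum s) := by
  classical
  obtain ⟨ι, _, p, e, hp, he, ⟨φ⟩⟩ := exists_pi_quot_equiv_of_isTorsion hM
  have hpX (i : ι) : ¬p i ∣ X :=
    not_dvd_of_isSMulRegular_quot_span_pow (hp i) (he i)
      (Pi.isSMulRegular_iff.1 ((φ.isSMulRegular_congr X).1 hX) i)
  let f (i : ι) : PrimePoly F × ℕ+ :=
    (⟨normalize (p i), monic_normalize (hp i).ne_zero,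
      (normalize_associated (p i)).symm.irreducible (hp i),
      fun h => hpX i (h ▸ (normalize_associated (p i)).symm.dvd)⟩,
      ⟨e i, Nat.pos_of_ne_zero (he i)⟩)
  have hspan (i : ι) : Ideal.span {p i ^ e i} = Ideal.span {(f i).1.poly ^ ((f i).2 : ℕ)} :=
    Ideal.span_singleton_eq_span_singleton.2 (normalize_associated (p i)).symm.pow_pow
  obtain ⟨ψ⟩ := nonempty_pi_cyclic_equiv_cyclicSum f
  exact ⟨_, ⟨φ ≪≫ₗ LinearEquiv.piCongrRight
    (fun i => Submodule.quotEquivOfEq _ _ (hspan i)) ≪≫ₗ ψ⟩⟩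

end ElementaryDivisors

section Conjugacy

/-- The bijection between conjugacy classes induced by an isomorphism. -/
def conjClassesCongr {G H : Type*} [Monoid G] [Monoid H] (e : G ≃* H) :
    ConjClasses G ≃ ConjClasses H where
  toFun := ConjClasses.map e
  invFun := ConjClasses.map e.symm
  left_inv := by rintro ⟨a⟩; exact congrArg ConjClasses.mk (e.symm_apply_apply a)
  right_inv := by rintro ⟨a⟩; exact congrArg ConjClasses.mk (e.apply_symm_apply a)

section CommRing

variable {R V : Type*} [CommRing R] [AddCommGroup V] [Module R V]

theorem isConj_iff_nonempty_aeval_equiv {a b : V ≃ₗ[R] V} :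
    IsConj a b ↔
      Nonempty (Module.AEval' (a : V →ₗ[R] V) ≃ₗ[R[X]] Module.AEval' (b : V →ₗ[R] V)) := by
  simp only [isConj_iff, mul_inv_eq_iff_eq_mul]
  constructor
  · rintro ⟨c, hc⟩
    refine ⟨LinearEquiv.ofAEval _ (c ≪≫ₗ Module.AEval'.of (b : V →ₗ[R] V)) fun v => ?_⟩
    have hcv : c (a v) = b (c v) := LinearEquiv.congr_fun hc v
    simp [Module.AEval'.X_smul_of, hcv]
  · rintro ⟨φ⟩
    refine ⟨Module.AEval'.of _ ≪≫ₗ φ.restrictScalars R ≪≫ₗ (Module.AEval'.of _).symm, ?_⟩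
    ext v
    have h := map_smul φ X (Module.AEval'.of (a : V →ₗ[R] V) v)
    rw [Module.AEval'.X_smul_of] at h
    simpa using congrArg (Module.AEval'.of (b : V →ₗ[R] V)).symm h

theorem isSMulRegular_X_aeval (a : V ≃ₗ[R] V) :
    IsSMulRegular (Module.AEval' (a : V →ₗ[R] V)) (X : R[X]) := by
  rw [isSMulRegular_iff_right_eq_zero_of_smul]
  intro m hm
  obtain ⟨v, rfl⟩ := (Module.AEval'.of (a : V →ₗ[R] V)).surjective m
  simpa [Module.AEval'.X_smul_of] using hm

end CommRing

variable {F V : Type*} [Field F] [AddCommGroup V] [Module F V]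

theorem exists_aeval_equiv_of_isSMulRegular_X [FiniteDimensional F V] {M : Type*} [AddCommGroup M]
    [Module F M] [Module F[X] M] [IsScalarTower F F[X] M] [FiniteDimensional F M]
    (hX : IsSMulRegular M (X : F[X])) (hfr : Module.finrank F V = Module.finrank F M) :
    ∃ a : V ≃ₗ[F] V, Nonempty (Module.AEval' (a : V →ₗ[F] V) ≃ₗ[F[X]] M) := by
  let φ : V ≃ₗ[F] M := LinearEquiv.ofFinrankEq V M hfr
  let mulX : M ≃ₗ[F] M := LinearEquiv.ofInjectiveEndo (Algebra.lsmul F F M (X : F[X])) hX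
  refine ⟨φ ≪≫ₗ mulX ≪≫ₗ φ.symm, ⟨LinearEquiv.ofAEval _ φ fun v => ?_⟩⟩
  exact φ.apply_symm_apply _

variable (F V) in
theorem nonempty_conjClasses_equiv_elemDivisors [FiniteDimensional F V] :
    Nonempty (ConjClasses (V ≃ₗ[F] V) ≃
      {s : ElemDivisors F // weight s = Module.finrank F V}) := by
  have hex (s : {s : ElemDivisors F // weight s = Module.finrank F V}) :=
    exists_aeval_equiv_of_isSMulRegular_X (V := V) (isSMulRegular_X_cyclicSum s.1)
      (s.2.symm.trans (finrank_cyclicSum s.1).symm)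
  choose a φ using hex
  refine ⟨(Equiv.ofBijective (fun s => ConjClasses.mk (a s)) ⟨fun s t hst => ?_, fun c => ?_⟩).symm⟩
  · obtain ⟨ψ⟩ := isConj_iff_nonempty_aeval_equiv.1 (ConjClasses.mk_eq_mk_iff_isConj.1 hst)
    exact Subtype.ext (eq_of_cyclicSum_equiv ((φ s).some.symm ≪≫ₗ ψ ≪≫ₗ (φ t).some))
  · obtain ⟨b, rfl⟩ := ConjClasses.exists_rep c
    obtain ⟨s, ⟨ψ⟩⟩ := exists_equiv_cyclicSum
      (Module.AEval.isTorsion_of_finiteDimensional F V (b : V →ₗ[F] V)) (isSMulRegular_X_aeval b)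
    have hs : weight s = Module.finrank F V := by
      rw [← finrank_cyclicSum]
      exact ((Module.AEval'.of (b : V →ₗ[F] V)) ≪≫ₗ ψ.restrictScalars F).finrank_eq.symm
    exact ⟨⟨s, hs⟩, ConjClasses.mk_eq_mk_iff_isConj.2
      (isConj_iff_nonempty_aeval_equiv.2 ⟨(φ ⟨s, hs⟩).some ≪≫ₗ ψ.symm⟩)⟩

end Conjugacy

section Colorings

/-- A multiset of positive integers, regarded as a partition of its sum. -/
noncomputable def multisetPNatEquivPartition : Multiset ℕ+ ≃ Σ m : ℕ, m.Partition :=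
  Equiv.ofBijective
    (fun s => ⟨(s.map PNat.val).sum, s.map PNat.val, fun hi => by
      obtain ⟨a, -, rfl⟩ := Multiset.mem_map.1 hi
      exact a.pos, rfl⟩) <| by
    refine ⟨fun s t h => ?_, ?_⟩
    · exact Multiset.map_injective PNat.coe_injective
        (congrArg (fun μ : Σ m : ℕ, m.Partition => μ.2.parts) h)
    · rintro ⟨_, parts, hpos, rfl⟩
      lift parts to Multiset ℕ+ using fun i hi => hpos hi
      exact ⟨parts, rfl⟩

theorem multisetPNatEquivPartition_fst (s : Multiset ℕ+) :
    (multisetPNatEquivPartition s).1 = (s.map PNat.val).sum :=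
  rfl

theorem multisetPNatEquivPartition_fst_ne_zero_iff {s : Multiset ℕ+} :
    (multisetPNatEquivPartition s).1 ≠ 0 ↔ s ≠ 0 := by
  refine ⟨fun h hs => h (by simp [hs, multisetPNatEquivPartition_fst]), fun h hs => ?_⟩
  obtain ⟨a, ha⟩ := Multiset.exists_mem_of_ne_zero h
  exact a.ne_zero (Multiset.sum_eq_zero_iff.1 hs _ (Multiset.mem_map_of_mem _ ha))

variable {P A X : Type*}

open Classical in
/-- A finite multiset of pairs `(p, a)` as a finitely supported family of multisets: the value at
`p` collects the `a` that occur with `p`. -/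
noncomputable def multisetProdEquivFinsupp : Multiset (P × A) ≃+ (P →₀ Multiset A) :=
  Multiset.toFinsupp.trans
    (Finsupp.curryAddEquiv.trans (Finsupp.mapRange.addEquiv Multiset.toFinsupp.symm))

theorem multisetProdEquivFinsupp_singleton (p : P) (a : A) :
    multisetProdEquivFinsupp {(p, a)} = Finsupp.single p {a} := by
  classical
  simp [multisetProdEquivFinsupp]

theorem sum_map_eq_sum_multisetProdEquivFinsupp (w : P → ℕ) (s : Multiset (P × ℕ+)) :
    (s.map fun d => (d.2 : ℕ) * w d.1).sum =
      (multisetProdEquivFinsupp s).sum fun p t => (t.map PNat.val).sum * w p := by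
  induction s using Multiset.induction_on with
  | empty => simp
  | cons d s ih =>
    rw [← Multiset.singleton_add, map_add, Finsupp.sum_add_index' (by simp) (by simp [add_mul]),
      ← ih, multisetProdEquivFinsupp_singleton]
    simp

theorem finsum_comp_eq_sum_mul_ncard {π : X → P} (hπ : ∀ p, (π ⁻¹' {p}).Finite) (g : P →₀ ℕ) :
    ∑ᶠ x, g (π x) = g.sum fun p a => a * (π ⁻¹' {p}).ncard := by
  classical
  have hfin : (π ⁻¹' g.support).Finite := g.support.finite_toSet.preimage' fun p _ => hπ p
  rw [finsum_eq_sum_of_support_subset (s := hfin.toFinset) _ fun x hx => by simpa using hx,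
    ← Finset.sum_fiberwise_of_maps_to (t := g.support) (g := π) (by simp)]
  refine Finset.sum_congr rfl fun p hp => ?_
  have hfib : (hfin.toFinset.filter fun x => π x = p) = (hπ p).toFinset := by
    ext x
    simpa using fun hx : π x = p => hx ▸ Finsupp.mem_support_iff.1 hp
  beta_reduce
  rw [hfib, Set.ncard_eq_toFinset_card _ (hπ p),
    Finset.sum_congr rfl fun x hx => congrArg g ((hπ p).mem_toFinset.1 hx), Finset.sum_const,
    smul_eq_mul, mul_comm]

/-- The pullback along `π` of a multiset of pairs `(p, e)`: the partition at `x` is formed by the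
parts `e` that occur with `π x`. -/
noncomputable def coloring (π : X → P) (s : Multiset (P × ℕ+)) (x : X) : Σ m : ℕ, m.Partition :=
  multisetPNatEquivPartition (multisetProdEquivFinsupp s (π x))

theorem coloring_injective {π : X → P} (hπ : Function.Surjective π) :
    Function.Injective (coloring π) := fun _ _ h =>
  multisetProdEquivFinsupp.injective <| DFunLike.coe_injective <|
    hπ.injective_comp_right <| funext fun x => multisetPNatEquivPartition.injective (congrFun h x)

theorem finite_coloring_ne_zero {π : X → P} (hπ : ∀ p, (π ⁻¹' {p}).Finite)
    (s : Multiset (P × ℕ+)) : {x | (coloring π s x).1 ≠ 0}.Finite := by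
  refine ((multisetProdEquivFinsupp s).support.finite_toSet.preimage' fun p _ => hπ p).subset ?_
  intro x hx
  simpa using multisetPNatEquivPartition_fst_ne_zero_iff.1 hx

theorem finsum_coloring {π : X → P} (hπ : ∀ p, (π ⁻¹' {p}).Finite) (s : Multiset (P × ℕ+)) :
    ∑ᶠ x, (coloring π s x).1 = (s.map fun d => (d.2 : ℕ) * (π ⁻¹' {d.1}).ncard).sum := by
  rw [sum_map_eq_sum_multisetProdEquivFinsupp fun p => (π ⁻¹' {p}).ncard,
    ← Finsupp.sum_mapRange_index (f := fun t : Multiset ℕ+ => (t.map PNat.val).sum)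
      (h := fun p a => a * (π ⁻¹' {p}).ncard) (hf := by simp) (by simp),
    ← finsum_comp_eq_sum_mul_ncard hπ]
  rfl

theorem exists_coloring_eq {π : X → P} (hπ : Function.Surjective π)
    {Λ : X → Σ m : ℕ, m.Partition} (hfin : {x | (Λ x).1 ≠ 0}.Finite) (hΛ : Λ.FactorsThrough π) :
    ∃ s, coloring π s = Λ := by
  obtain ⟨r, hr⟩ := hπ.hasRightInverse
  let parts (p : P) : Multiset ℕ+ := multisetPNatEquivPartition.symm (Λ (r p))
  have hparts : (Function.support parts).Finite := by
    refine (hfin.image π).subset fun p hp => ⟨r p, ?_, hr p⟩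
    rw [Set.mem_ofPred_eq, ← multisetPNatEquivPartition.apply_symm_apply (Λ (r p))]
    exact multisetPNatEquivPartition_fst_ne_zero_iff.2 hp
  refine ⟨multisetProdEquivFinsupp.symm (Finsupp.ofSupportFinite parts hparts), funext fun x => ?_⟩
  rw [coloring, AddEquiv.apply_symm_apply, Finsupp.ofSupportFinite_coe,
    Equiv.apply_symm_apply, hΛ (hr (π x))]

/-- The correspondence `s ↦ coloring π s` between multisets of pairs and colorings that are constant
on the fibres of `π`. A pair `(p, e)` contributes `e` at every point of the fibre over `p`, hence
the weights. -/
noncomputable def coloringEquiv {π : X → P} (hπ : Function.Surjective π)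
    (hfin : ∀ p, (π ⁻¹' {p}).Finite) (n : ℕ) :
    {s : Multiset (P × ℕ+) // (s.map fun d => (d.2 : ℕ) * (π ⁻¹' {d.1}).ncard).sum = n} ≃
      {Λ : X → Σ m : ℕ, m.Partition //
        {x | (Λ x).1 ≠ 0}.Finite ∧ Λ.FactorsThrough π ∧ ∑ᶠ x, (Λ x).1 = n} :=
  Equiv.ofBijective
    (fun s => ⟨coloring π s.1, finite_coloring_ne_zero hfin s.1,
      fun _ _ h => by simp [coloring, h], (finsum_coloring hfin s.1).trans s.2⟩) <| by
    refine ⟨fun s t h => Subtype.ext (coloring_injective hπ (congrArg Subtype.val h)), ?_⟩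
    rintro ⟨Λ, hΛfin, hΛ, hsum⟩
    obtain ⟨s, rfl⟩ := exists_coloring_eq hπ hΛfin hΛ
    exact ⟨⟨s, (finsum_coloring hfin s).symm.trans hsum⟩, rfl⟩

end Colorings

section MinimalPolynomials

variable {F K : Type*} [Field F] [Field K] [Algebra F K]

theorem ne_X_of_aeval_eq_zero {x : Kˣ} {p : F[X]} (h : aeval (x : K) p = 0) : p ≠ X := by
  rintro rfl
  simp at h

variable (F) in
/-- The minimal polynomial over `F` of a unit of `K`; it differs from `X` as the unit is nonzero. -/
noncomputable def unitMinpoly [Algebra.IsAlgebraic F K] (x : Kˣ) : PrimePoly F :=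
  ⟨minpoly F (x : K), minpoly.monic (Algebra.IsIntegral.isIntegral _),
    minpoly.irreducible (Algebra.IsIntegral.isIntegral _),
    ne_X_of_aeval_eq_zero (minpoly.aeval F (x : K))⟩

theorem ne_zero_of_aeval_eq_zero {p : PrimePoly F} {y : K} (h : aeval y p.poly = 0) : y ≠ 0 := by
  rintro rfl
  have hmin := minpoly.eq_of_irreducible_of_monic p.irreducible h p.monic
  rw [minpoly.zero] at hmin
  exact p.ne_X hmin

section Algebraic

variable [Algebra.IsAlgebraic F K]

theorem unitMinpoly_eq_iff {x : Kˣ} {p : PrimePoly F} :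
    unitMinpoly F x = p ↔ aeval (x : K) p.poly = 0 := by
  constructor
  · rintro rfl
    exact minpoly.aeval _ _
  · intro h
    exact PrimePoly.ext (minpoly.eq_of_irreducible_of_monic p.irreducible h p.monic).symm

theorem image_val_unitMinpoly_fiber (p : PrimePoly F) :
    Units.val '' (unitMinpoly (K := K) F ⁻¹' {p}) = p.poly.rootSet K := by
  ext y
  simp only [Set.mem_image, Set.mem_preimage, Set.mem_singleton_iff, unitMinpoly_eq_iff,
    mem_rootSet_of_ne p.monic.ne_zero]
  refine ⟨?_, fun hy => ⟨Units.mk0 y (ne_zero_of_aeval_eq_zero hy), hy, rfl⟩⟩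
  rintro ⟨x, hx, rfl⟩
  exact hx

theorem finite_unitMinpoly_fiber (p : PrimePoly F) :
    (unitMinpoly (K := K) F ⁻¹' {p}).Finite :=
  .of_finite_image (image_val_unitMinpoly_fiber (K := K) p ▸ rootSet_finite _ _)
    Units.val_injective.injOn

theorem ncard_unitMinpoly_fiber [PerfectField F] [IsAlgClosed K] (p : PrimePoly F) :
    (unitMinpoly (K := K) F ⁻¹' {p}).ncard = p.poly.natDegree := by
  rw [← Set.ncard_image_of_injective _ Units.val_injective, image_val_unitMinpoly_fiber,
    ← Nat.card_coe_set_eq, Nat.card_eq_fintype_card]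
  exact card_rootSet_eq_natDegree (PerfectField.separable_of_irreducible p.irreducible)
    (IsAlgClosed.splits _)

theorem unitMinpoly_surjective [IsAlgClosed K] :
    Function.Surjective (unitMinpoly F : Kˣ → PrimePoly F) := by
  intro p
  obtain ⟨y, hy⟩ := IsAlgClosed.exists_aeval_eq_zero K p.poly
    (degree_pos_of_irreducible p.irreducible).ne'
  exact ⟨Units.mk0 y (ne_zero_of_aeval_eq_zero hy), unitMinpoly_eq_iff.2 hy⟩

end Algebraic

theorem unitMinpoly_eq_unitMinpoly_iff [Normal F K] {x y : Kˣ} :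
    unitMinpoly F x = unitMinpoly F y ↔ ∃ σ : Gal(K/F), Units.map (σ : K →* K) y = x := by
  simp only [unitMinpoly, PrimePoly.mk.injEq, Units.ext_iff]
  exact isConjRoot_iff_exists_algEquiv

theorem factorsThrough_unitMinpoly_iff [Normal F K] {α : Type*} {Λ : Kˣ → α} :
    Λ.FactorsThrough (unitMinpoly F) ↔
      ∀ (σ : Gal(K/F)) (x : Kˣ), Λ (Units.map (σ : K →* K) x) = Λ x := by
  refine ⟨fun h σ x => h (unitMinpoly_eq_unitMinpoly_iff.2 ⟨σ, rfl⟩), fun h x y hxy => ?_⟩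
  obtain ⟨σ, rfl⟩ := unitMinpoly_eq_unitMinpoly_iff.1 hxy
  exact h σ y

end MinimalPolynomials

section Frobenius

open IntermediateField

variable {F K : Type*} [Field F] [Fintype F] [Field K] [Algebra F K] [Algebra.IsAlgebraic F K]

theorem exists_apply_eq_pow_card_pow (σ : Gal(K/F)) (x : K) :
    ∃ k : ℕ, σ x = x ^ Fintype.card F ^ k := by
  have : FiniteDimensional F F⟮x⟯ :=
    IntermediateField.adjoin.finiteDimensional (Algebra.IsIntegral.isIntegral x)
  have : Finite F⟮x⟯ := Module.finite_of_finite F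
  obtain ⟨k, hk⟩ := (FiniteField.bijective_frobeniusAlgEquivOfAlgebraic_pow F F⟮x⟯).2
    (σ.restrictNormal F⟮x⟯)
  refine ⟨k, ?_⟩
  have hσ := σ.restrictNormal_commutes F⟮x⟯ (IntermediateField.AdjoinSimple.gen F x)
  rw [← hk] at hσ
  dsimp only at hσ
  rw [AlgEquiv.coe_pow, FiniteField.coe_frobeniusAlgEquivOfAlgebraic_iterate] at hσ
  simpa using hσ.symm

theorem forall_pow_card_iff_forall_gal {α : Type*} {Λ : Kˣ → α} :
    (∀ x, Λ (x ^ Fintype.card F) = Λ x) ↔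
      ∀ (σ : Gal(K/F)) (x : Kˣ), Λ (Units.map (σ : K →* K) x) = Λ x := by
  constructor
  · intro h σ x
    have hpow (k : ℕ) : Λ (x ^ Fintype.card F ^ k) = Λ x := by
      induction k with
      | zero => simp
      | succ k ih => rw [pow_succ, pow_mul, h, ih]
    obtain ⟨k, hk⟩ := exists_apply_eq_pow_card_pow σ (x : K)
    rw [← hpow k]
    exact congrArg Λ (Units.ext (by simpa using hk))
  · intro h x
    rw [← h (FiniteField.frobeniusAlgEquivOfAlgebraic F K) x]
    exact congrArg Λ (Units.ext (by simp))

end Frobenius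

end GLClasses

open Matrix in
theorem conjClasses_GL_eq_card_colorings_general (F K n : Type*) [Field F] [PerfectField F]
    [Field K] [Algebra F K] [IsAlgClosure F K] [Fintype n] [DecidableEq n] :
    Nonempty (ConjClasses (GL n F) ≃ {Λ : Kˣ → Σ m : ℕ, m.Partition //
      {x | (Λ x).1 ≠ 0}.Finite ∧
      (∀ (σ : Gal(K/F)) (x : Kˣ), Λ (Units.map (σ : K →* K) x) = Λ x) ∧
      ∑ᶠ x, (Λ x).1 = Fintype.card n}) := by
  have : IsAlgClosed K := IsAlgClosure.isAlgClosed F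
  let toLinearEquiv : GL n F ≃* ((n → F) ≃ₗ[F] (n → F)) :=
    GeneralLinearGroup.toLin.trans (LinearMap.GeneralLinearGroup.generalLinearEquiv F (n → F))
  obtain ⟨classify⟩ := GLClasses.nonempty_conjClasses_equiv_elemDivisors F (n → F)
  have hweight (s : GLClasses.ElemDivisors F) :
      GLClasses.weight s = Module.finrank F (n → F) ↔
        (s.map fun d => (d.2 : ℕ) * (GLClasses.unitMinpoly (K := K) F ⁻¹' {d.1}).ncard).sum =
          Fintype.card n := by
    simp only [GLClasses.weight, GLClasses.ncard_unitMinpoly_fiber,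
      Module.finrank_fintype_fun_eq_card]
  exact ⟨(GLClasses.conjClassesCongr toLinearEquiv).trans <| classify.trans <|
    (Equiv.subtypeEquivRight hweight).trans <|
    (GLClasses.coloringEquiv GLClasses.unitMinpoly_surjective
      GLClasses.finite_unitMinpoly_fiber (Fintype.card n)).trans <|
    Equiv.subtypeEquivRight fun _ => by rw [GLClasses.factorsThrough_unitMinpoly_iff]⟩

/-- **Conjugacy classes of `GL_n(F_q)` as Frobenius-stable partition-valued colorings of
`K^×`** (Jordan decomposition): the number of conjugacy classes of `GL_n(F_q)` equals the
number of functions `Λ` from `K^×` (`K` an algebraic closure of `F_q`) to the set of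
partitions of nonnegative integers (encoded as the sigma type `Σ m, Partition m`) that are
nonempty for only finitely many `x`, satisfy `Λ(x^q) = Λ(x)`, and have total size `n`. -/
theorem conjClasses_GL_eq_card_colorings (F : Type*) [Field F] [Fintype F]
    (q : ℕ) (hq : Fintype.card F = q) (n : ℕ) (hn : 1 ≤ n) :
    Nat.card (ConjClasses (Matrix.GeneralLinearGroup (Fin n) F)) =
      Nat.card {Λ : (AlgebraicClosure F)ˣ → Σ m : ℕ, m.Partition //
        {x : (AlgebraicClosure F)ˣ | (Λ x).1 ≠ 0}.Finite ∧
        (∀ x : (AlgebraicClosure F)ˣ, Λ (x ^ q) = Λ x) ∧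
        ∑ᶠ x : (AlgebraicClosure F)ˣ, (Λ x).1 = n} := by
  subst hq
  obtain ⟨e⟩ := conjClasses_GL_eq_card_colorings_general F (AlgebraicClosure F) (Fin n)
  refine Nat.card_congr (e.trans (Equiv.subtypeEquivRight fun _ => ?_))
  rw [GLClasses.forall_pow_card_iff_forall_gal, Fintype.card_fin]
end

section
/- Let F_q be a finite field with q elements, let K be an algebraic closure of F_q, and let n ≥ 1. The number of similarity classes of n×n matrices over F_q (orbits of GL_n(F_q) acting by conjugation on M_n(F_q)) equals the number of functions Λ from K to the set of partitions of nonnegative integers such that Λ(x) is the empty partition for all but finitely many x, Λ(x^q) = Λ(x) for every x ∈ K, and ∑_{x ∈ K} |Λ(x)| = n. -/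
/-!
A matrix `A` over a field `F` makes `F ^ n` a torsion `F[X]`-module, and two matrices are similar
exactly when their modules are isomorphic. Over a principal ideal domain a finitely generated
torsion module is a direct sum of modules `R ⧸ v ^ e`, and the multiset of pairs `(v, e)` is
determined by the module: the length of `(R ⧸ v ^ k) ⊗ M` is the sum of `min k e` over the pairs
`(v, e)`, and these sums for all `k` determine the exponents `e`. So similarity classes correspond
to multisets of pairs `(v, e)` with `∑ e * deg v = n`.

Sending `x` in an algebraic closure `K` to the ideal of polynomials vanishing at `x` identifies the
primes `v` of `F[X]` with the Galois orbits in `K`, and if `F` is perfect, the orbit of `v` has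
`deg v` elements. Recording at every point `x` over `v` the exponents `e` of the pairs `(v, e)`
gives a Galois-invariant partition-valued function of total size `∑ e * deg v`. Over a finite field,
invariance under the Galois group is invariance under the Frobenius.
-/

open Polynomial Module IsDedekindDomain TensorProduct

namespace SimilarityClasses

section MultisetsOfPairs

variable {α β : Type*}

open Classical in
/-- Currying of multisets of pairs: `curryMultiset s a` is the multiset of the `b` with
`(a, b) ∈ s`, counted with multiplicity. -/
noncomputable def curryMultiset : Multiset (α × β) ≃+ (α →₀ Multiset β) :=
  Multiset.toFinsupp.trans <|
    Finsupp.curryAddEquiv.trans (Finsupp.mapRange.addEquiv Multiset.toFinsupp.symm)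

lemma curryMultiset_singleton (a : α × β) :
    curryMultiset {a} = Finsupp.single a.1 {a.2} := by
  classical
  simp [curryMultiset, Finsupp.curry_single]

lemma sum_map_curryMultiset_apply [DecidableEq α] {M : Type*} [AddCommMonoid M] (f : β → M)
    (s : Multiset (α × β)) (a : α) :
    ((curryMultiset s a).map f).sum = (s.map fun b => if b.1 = a then f b.2 else 0).sum := by
  induction s using Multiset.induction_on with
  | empty => simp
  | cons b s ih =>
    rw [← Multiset.singleton_add, map_add, curryMultiset_singleton, Finsupp.add_apply,
      Multiset.map_add, Multiset.sum_add, ih, Finsupp.single_apply]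
    split_ifs <;> simp_all

lemma exists_equiv_coe_eq {ι : Type*} [Fintype ι] [DecidableEq α] (f : ι → α) :
    ∃ σ : ι ≃ Finset.univ.val.map f, ∀ i, f i = (σ i : α) := by
  have hcard (a : α) : Fintype.card {i // f i = a} = (Finset.univ.val.map f).count a := by
    rw [Fintype.card_subtype, Multiset.count_map]
    simp only [Finset.card_def, Finset.filter_val, eq_comm]
  exact ⟨(Equiv.sigmaFiberEquiv f).symm.trans
    (Equiv.sigmaCongrRight fun a => Fintype.equivFinOfCardEq (hcard a)), fun _ => rfl⟩

/-- The sum of `e * d a` over the pairs `(a, e)` of a multiset, that is, the total size of the parts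
`e` when a part attached to `a` occurs at `d a` points. -/
def weightedSize (d : α → ℕ) (s : Multiset (α × ℕ+)) : ℕ :=
  (s.map fun a => a.2 * d a.1).sum

end MultisetsOfPairs

section PositiveMultisets

lemma sum_map_min_succ (s : Multiset ℕ+) (k : ℕ) :
    (s.map fun e : ℕ+ => min (k + 1) e).sum =
      (s.map fun e : ℕ+ => min k e).sum + s.countP fun e : ℕ+ => k < e := by
  induction s using Multiset.induction_on with
  | empty => simp
  | cons a s ih =>
    simp only [Multiset.map_cons, Multiset.sum_cons, Multiset.countP_cons, ih]
    split_ifs <;> omega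

lemma countP_lt_eq_countP_add_count (s : Multiset ℕ+) (e : ℕ+) :
    s.countP (fun a : ℕ+ => e.natPred < a) = s.countP (fun a : ℕ+ => (e : ℕ) < a) + s.count e := by
  induction s using Multiset.induction_on with
  | empty => simp
  | cons a s ih =>
    have := e.natPred_add_one
    simp only [Multiset.countP_cons, Multiset.count_cons, ih, ← PNat.coe_inj]
    split_ifs <;> omega

theorem eq_of_sum_map_min_eq {s t : Multiset ℕ+}
    (h : ∀ k : ℕ, (s.map fun e : ℕ+ => min k e).sum = (t.map fun e : ℕ+ => min k e).sum) :
    s = t := by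
  have hcountP (k : ℕ) : s.countP (fun e : ℕ+ => k < e) = t.countP fun e : ℕ+ => k < e := by
    have hs := sum_map_min_succ s k
    rw [h, h, sum_map_min_succ] at hs
    exact (Nat.add_left_cancel hs).symm
  ext e
  have hs := countP_lt_eq_countP_add_count s e
  rw [hcountP, hcountP, countP_lt_eq_countP_add_count] at hs
  exact (Nat.add_left_cancel hs).symm

end PositiveMultisets

section PrincipalIdealRing

universe u

lemma nonempty_pi_linearEquiv_pi_subtype {R ι : Type*} {M : ι → Type*} [Semiring R]
    [∀ i, AddCommMonoid (M i)] [∀ i, Module R (M i)] (p : ι → Prop)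
    (hp : ∀ i, ¬ p i → Subsingleton (M i)) :
    Nonempty ((∀ i, M i) ≃ₗ[R] ∀ i : Subtype p, M i) := by
  classical
  have (i : {i // ¬ p i}) : Subsingleton (M i) := hp i i.2
  let : Unique (∀ i : {i // ¬ p i}, M i) := uniqueOfSubsingleton 0
  let restrict : (∀ i, M i) →ₗ[R] ∀ i : Subtype p, M i := LinearMap.pi fun i => LinearMap.proj i.1
  exact ⟨LinearEquiv.ofBijective restrict
    ((Equiv.piEquivPiSubtypeProd p M).trans (Equiv.prodUnique _ _)).bijective⟩

variable {R : Type u} [CommRing R]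

lemma nonempty_pi_quotient_linearEquiv {ι α : Type*} [DecidableEq α] {s : Multiset α} {f : ι → α}
    (σ : ι ≃ s) (hσ : ∀ i, f i = σ i) (I : α → Ideal R) :
    Nonempty ((∀ i, R ⧸ I (f i)) ≃ₗ[R] ∀ i : s, R ⧸ I i) :=
  ⟨LinearEquiv.piCongrRight (fun i => Submodule.quotEquivOfEq _ _ (congrArg I (hσ i))) ≪≫ₗ
    LinearEquiv.piCongrLeft R (fun j : s => R ⧸ I j) σ⟩

lemma length_tensor_quotient (I J : Ideal R) :
    Module.length R ((R ⧸ I) ⊗[R] (R ⧸ J)) = Module.length R (R ⧸ I ⊔ J) := by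
  have hmap : I • (⊤ : Submodule R (R ⧸ J)) = Submodule.map J.mkQ I := by
    rw [← LinearMap.range_eq_top.2 J.mkQ_surjective, ← Submodule.map_top, ← Submodule.map_smul'',
      smul_eq_mul, Ideal.mul_top]
  rw [(quotTensorEquivQuotSMul (R ⧸ J) I).length_eq, hmap, sup_comm,
    (Submodule.quotientQuotientEquivQuotientSup J I).length_eq]

/-- The cyclic module `R ⧸ v ^ e` attached to the elementary divisor `a = (v, e)`. -/
abbrev PrimaryQuotient (a : HeightOneSpectrum R × ℕ+) : Type u :=
  R ⧸ a.1.asIdeal ^ (a.2 : ℕ)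

open Classical in
/-- The module `∏ R ⧸ v ^ e` over the pairs `(v, e)` of a multiset of elementary divisors, a pair of
multiplicity `m` contributing `m` factors. -/
abbrev PrimarySum (s : Multiset (HeightOneSpectrum R × ℕ+)) : Type u :=
  ∀ i : s, PrimaryQuotient (i : HeightOneSpectrum R × ℕ+)

variable [IsDomain R] [IsPrincipalIdealRing R]

lemma exists_irreducible_asIdeal_eq (v : HeightOneSpectrum R) :
    ∃ p : R, Irreducible p ∧ v.asIdeal = Ideal.span {p} := by
  obtain ⟨p, hp⟩ := (IsPrincipalIdealRing.principal v.asIdeal).principal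
  have hp0 : p ≠ 0 := fun h => v.ne_bot (by simp [hp, h])
  exact ⟨p, ((Ideal.span_singleton_prime hp0).1 (hp.subst v.isPrime)).irreducible, hp⟩

lemma length_quotient_pow (v : HeightOneSpectrum R) (n : ℕ) :
    Module.length R (R ⧸ v.asIdeal ^ n) = n := by
  obtain ⟨p, hp, hv⟩ := exists_irreducible_asIdeal_eq v
  rw [hv, Ideal.span_singleton_pow]
  calc Ring.ord R (p ^ n) = n • Ring.ord R p :=
        Ring.ord_pow (mem_nonZeroDivisors_of_ne_zero hp.ne_zero) n
    _ = n := by rw [Ring.ord_of_irreducible hp, nsmul_one]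

lemma length_quotient_pow_sup_pow [DecidableEq (HeightOneSpectrum R)] (v w : HeightOneSpectrum R)
    (k e : ℕ) :
    Module.length R (R ⧸ v.asIdeal ^ k ⊔ w.asIdeal ^ e) =
      (if w = v then min k e else 0 : ℕ) := by
  split_ifs with h
  · subst h
    rcases le_total k e with hke | hke
    · rw [sup_eq_left.2 (Ideal.pow_le_pow_right hke), length_quotient_pow, min_eq_left hke]
    · rw [sup_eq_right.2 (Ideal.pow_le_pow_right hke), length_quotient_pow, min_eq_right hke]
  · rw [(v.isCoprime_pow_of_ne w (Ne.symm h) k e).sup_eq, Nat.cast_zero, Module.length_eq_zero_iff]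
    exact Ideal.Quotient.subsingleton_iff.2 rfl

lemma length_tensor_primarySum (v : HeightOneSpectrum R) (k : ℕ)
    (s : Multiset (HeightOneSpectrum R × ℕ+)) :
    Module.length R ((R ⧸ v.asIdeal ^ k) ⊗[R] PrimarySum s) =
      ((curryMultiset s v).map fun e : ℕ+ => min k e).sum := by
  classical
  rw [(TensorProduct.piRight R R (R ⧸ v.asIdeal ^ k) fun i : s => PrimaryQuotient i.1).length_eq,
    Module.length_pi_of_fintype]
  simp only [length_tensor_quotient, length_quotient_pow_sup_pow]
  rw [← Nat.cast_sum, sum_map_curryMultiset_apply, ← Multiset.map_univ s]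
  rfl

theorem nonempty_primarySum_linearEquiv_iff {s t : Multiset (HeightOneSpectrum R × ℕ+)} :
    Nonempty (PrimarySum s ≃ₗ[R] PrimarySum t) ↔ s = t := by
  refine ⟨fun ⟨φ⟩ => ?_, fun h => h ▸ ⟨LinearEquiv.refl R _⟩⟩
  refine curryMultiset.injective (Finsupp.ext fun v => eq_of_sum_map_min_eq fun k => ?_)
  have hlength := (LinearEquiv.lTensor (R ⧸ v.asIdeal ^ k) φ).length_eq
  rw [length_tensor_primarySum, length_tensor_primarySum] at hlength
  exact_mod_cast hlength

theorem exists_linearEquiv_primarySum {M : Type*} [AddCommGroup M] [Module R M]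
    [Module.Finite R M] (hM : Module.IsTorsion R M) :
    ∃ s : Multiset (HeightOneSpectrum R × ℕ+), Nonempty (M ≃ₗ[R] PrimarySum s) := by
  classical
  obtain ⟨ι, _, p, hp, e, ⟨φ⟩⟩ := Module.equiv_directSum_of_isTorsion hM
  let f (i : {i // e i ≠ 0}) : HeightOneSpectrum R × ℕ+ :=
    (.ofPrime (Ideal.prime_span_singleton_iff.2 (hp i).prime), ⟨e i, Nat.pos_of_ne_zero i.2⟩)
  have htrivial (i : ι) (hi : ¬ e i ≠ 0) : Subsingleton (R ⧸ Submodule.span R {p i ^ e i}) := by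
    rw [not_not.1 hi, pow_zero]
    exact Ideal.Quotient.subsingleton_iff.2 Ideal.span_singleton_one
  have hspan (i : {i // e i ≠ 0}) :
      Submodule.span R {p i ^ e i} = (f i).1.asIdeal ^ ((f i).2 : ℕ) :=
    (Ideal.span_singleton_pow (p i) (e i)).symm
  obtain ⟨ψ⟩ := nonempty_pi_linearEquiv_pi_subtype (R := R) _ htrivial
  obtain ⟨σ, hσ⟩ := exists_equiv_coe_eq f
  obtain ⟨χ⟩ := nonempty_pi_quotient_linearEquiv σ hσ fun a => a.1.asIdeal ^ (a.2 : ℕ)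
  exact ⟨_, ⟨φ ≪≫ₗ DirectSum.linearEquivFunOnFintype R ι _ ≪≫ₗ ψ ≪≫ₗ
    LinearEquiv.piCongrRight (fun i => Submodule.quotEquivOfEq _ _ (hspan i)) ≪≫ₗ χ⟩⟩

end PrincipalIdealRing

section Similarity

variable {R : Type*} [CommRing R]

variable {V W : Type*} [AddCommGroup V] [Module R V] [AddCommGroup W] [Module R W]

lemma nonempty_aeval_linearEquiv_iff {f : End R V} {g : End R W} :
    Nonempty (AEval' f ≃ₗ[R[X]] AEval' g) ↔ ∃ e : V ≃ₗ[R] W, ∀ x, e (f x) = g (e x) := by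
  constructor
  · rintro ⟨φ⟩
    refine ⟨AEval'.of f ≪≫ₗ φ.restrictScalars R ≪≫ₗ (AEval'.of g).symm, fun x => ?_⟩
    have hX : φ (AEval'.of f (f x)) = (X : R[X]) • φ (AEval'.of f x) := by
      rw [← AEval'.X_smul_of, map_smul]
    exact (congrArg (AEval'.of g).symm hX).trans (AEval'.of_symm_X_smul g _)
  · rintro ⟨e, he⟩
    refine ⟨LinearEquiv.ofAEval _ (e ≪≫ₗ AEval'.of g) fun x => ?_⟩
    simp only [LinearEquiv.trans_apply, AEval'.X_smul_of]
    exact congrArg (AEval'.of g) (he x)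

variable {ι : Type*} [Fintype ι] [DecidableEq ι]

/-- The space `R ^ ι` as an `R[X]`-module on which `X` acts as the matrix `A`. -/
abbrev MatrixModule (A : Matrix ι ι R) : Type _ :=
  AEval' (Matrix.toLin' A)

/-- The orbit of `A` under conjugation by `GL ι R`. -/
def similarityClass (A : Matrix ι ι R) : Set (Matrix ι ι R) :=
  {B | ∃ g : Matrix.GeneralLinearGroup ι R, g.val * A * g⁻¹.val = B}

lemma mem_similarityClass_iff {A B : Matrix ι ι R} :
    B ∈ similarityClass A ↔ Nonempty (MatrixModule A ≃ₗ[R[X]] MatrixModule B) := by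
  rw [nonempty_aeval_linearEquiv_iff]
  refine (Matrix.GeneralLinearGroup.toLin.trans
    (LinearMap.GeneralLinearGroup.generalLinearEquiv R (ι → R))).toEquiv.exists_congr fun g => ?_
  simp only [Units.mul_inv_eq_iff_eq_mul, Matrix.ext_iff_mulVec, ← Matrix.mulVec_mulVec]
  rfl

lemma similarityClass_eq_iff {A B : Matrix ι ι R} :
    similarityClass A = similarityClass B ↔
      Nonempty (MatrixModule A ≃ₗ[R[X]] MatrixModule B) := by
  refine ⟨fun h => ?_, fun ⟨φ⟩ => Set.ext fun C => ?_⟩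
  · rw [← mem_similarityClass_iff, h, mem_similarityClass_iff]
    exact ⟨LinearEquiv.refl _ _⟩
  · simp only [mem_similarityClass_iff]
    exact ⟨fun ⟨ψ⟩ => ⟨φ.symm ≪≫ₗ ψ⟩, fun ⟨ψ⟩ => ⟨φ ≪≫ₗ ψ⟩⟩

end Similarity

section ElementaryDivisors

variable {F : Type*} [Field F]

/-- The degree over `F` of the residue field `F[X] ⧸ v`, that is, the degree of an irreducible
polynomial generating `v`. -/
noncomputable def residueDegree (v : HeightOneSpectrum F[X]) : ℕ :=
  finrank F (F[X] ⧸ v.asIdeal)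

instance finite_quotient_pow (v : HeightOneSpectrum F[X]) (n : ℕ) :
    Module.Finite F (F[X] ⧸ v.asIdeal ^ n) := by
  obtain ⟨p, hp, hv⟩ := exists_irreducible_asIdeal_eq v
  rw [hv, Ideal.span_singleton_pow]
  exact (AdjoinRoot.powerBasis (pow_ne_zero n hp.ne_zero)).finite

lemma finrank_quotient_pow (v : HeightOneSpectrum F[X]) (n : ℕ) :
    finrank F (F[X] ⧸ v.asIdeal ^ n) = n * residueDegree v := by
  obtain ⟨p, -, hv⟩ := exists_irreducible_asIdeal_eq v
  rw [residueDegree, hv, Ideal.span_singleton_pow, finrank_quotient_span_eq_natDegree,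
    finrank_quotient_span_eq_natDegree, natDegree_pow]

lemma finrank_primarySum (s : Multiset (HeightOneSpectrum F[X] × ℕ+)) :
    finrank F (PrimarySum s) = weightedSize residueDegree s := by
  classical
  conv_rhs => rw [weightedSize, ← Multiset.map_univ s]
  simp only [finrank_pi_fintype, finrank_quotient_pow]
  rfl

variable {ι : Type*} [Fintype ι] [DecidableEq ι]

theorem exists_matrixModule_linearEquiv {N : Type*} [AddCommGroup N] [Module F N] [Module F[X] N]
    [IsScalarTower F F[X] N] [Module.Finite F N] (hN : finrank F N = Fintype.card ι) :
    ∃ A : Matrix ι ι F, Nonempty (MatrixModule A ≃ₗ[F[X]] N) := by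
  let e : (ι → F) ≃ₗ[F] N := LinearEquiv.ofFinrankEq _ _ (by rw [hN, finrank_fintype_fun_eq_card])
  let mulX : N →ₗ[F] N := (LinearMap.lsmul F[X] N X).restrictScalars F
  refine ⟨LinearMap.toMatrix' (e.symm ∘ₗ mulX ∘ₗ e), ⟨LinearEquiv.ofAEval _ e fun m => ?_⟩⟩
  rw [Matrix.toLin'_toMatrix']
  exact e.apply_symm_apply _

lemma exists_matrixModule_linearEquiv_primarySum (A : Matrix ι ι F) :
    ∃ s : Multiset (HeightOneSpectrum F[X] × ℕ+),
      Nonempty (MatrixModule A ≃ₗ[F[X]] PrimarySum s) :=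
  exists_linearEquiv_primarySum
    (AEval.isTorsion_of_finiteDimensional F (ι → F) (Matrix.toLin' A))

/-- The elementary divisors of `A`: the prime ideals `v` and exponents `e` of the summands
`F[X] ⧸ v ^ e` in the primary decomposition of `MatrixModule A`. -/
noncomputable def elementaryDivisors (A : Matrix ι ι F) : Multiset (HeightOneSpectrum F[X] × ℕ+) :=
  (exists_matrixModule_linearEquiv_primarySum A).choose

lemma nonempty_linearEquiv_primarySum_elementaryDivisors (A : Matrix ι ι F) :
    Nonempty (MatrixModule A ≃ₗ[F[X]] PrimarySum (elementaryDivisors A)) :=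
  (exists_matrixModule_linearEquiv_primarySum A).choose_spec

lemma elementaryDivisors_eq_iff {A : Matrix ι ι F} {s : Multiset (HeightOneSpectrum F[X] × ℕ+)} :
    elementaryDivisors A = s ↔ Nonempty (MatrixModule A ≃ₗ[F[X]] PrimarySum s) := by
  obtain ⟨φ⟩ := nonempty_linearEquiv_primarySum_elementaryDivisors A
  rw [← nonempty_primarySum_linearEquiv_iff]
  exact ⟨fun ⟨ψ⟩ => ⟨φ ≪≫ₗ ψ⟩, fun ⟨ψ⟩ => ⟨φ.symm ≪≫ₗ ψ⟩⟩

lemma similarityClass_eq_iff_elementaryDivisors_eq {A B : Matrix ι ι F} :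
    similarityClass A = similarityClass B ↔ elementaryDivisors A = elementaryDivisors B := by
  obtain ⟨φ⟩ := nonempty_linearEquiv_primarySum_elementaryDivisors B
  rw [similarityClass_eq_iff, elementaryDivisors_eq_iff]
  exact ⟨fun ⟨ψ⟩ => ⟨ψ ≪≫ₗ φ⟩, fun ⟨ψ⟩ => ⟨ψ ≪≫ₗ φ.symm⟩⟩

lemma range_elementaryDivisors :
    Set.range (elementaryDivisors (F := F) (ι := ι)) =
      {s | weightedSize residueDegree s = Fintype.card ι} := by
  ext s
  constructor
  · rintro ⟨A, rfl⟩
    obtain ⟨φ⟩ := nonempty_linearEquiv_primarySum_elementaryDivisors A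
    rw [Set.mem_ofPred_eq, ← finrank_primarySum, ← (φ.restrictScalars F).finrank_eq,
      ← (AEval'.of (Matrix.toLin' A)).finrank_eq, finrank_fintype_fun_eq_card]
  · intro hs
    obtain ⟨A, hA⟩ := exists_matrixModule_linearEquiv ((finrank_primarySum s).trans hs)
    exact ⟨A, elementaryDivisors_eq_iff.2 hA⟩

variable (F ι) in
theorem nonempty_similarityClass_equiv :
    Nonempty (Set.range (similarityClass (R := F) (ι := ι)) ≃
      {s : Multiset (HeightOneSpectrum F[X] × ℕ+) //
        weightedSize residueDegree s = Fintype.card ι}) := by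
  have hker : Setoid.ker (similarityClass (R := F) (ι := ι)) = Setoid.ker elementaryDivisors :=
    Setoid.ext fun _ _ => similarityClass_eq_iff_elementaryDivisors_eq
  exact ⟨(Setoid.quotientKerEquivRange _).symm.trans <|
    (Quotient.congrRight fun _ _ => by rw [hker]).trans <|
    (Setoid.quotientKerEquivRange _).trans <| Equiv.setCongr range_elementaryDivisors⟩

end ElementaryDivisors

section Colorings

/-- A multiset of positive integers as a partition of its sum. -/
def partitionOfParts (s : Multiset ℕ+) : Σ m : ℕ, m.Partition :=
  ⟨_, s.map (↑), fun hi => by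
    obtain ⟨e, -, rfl⟩ := Multiset.mem_map.1 hi
    exact e.pos, rfl⟩

lemma partitionOfParts_fst (s : Multiset ℕ+) :
    (partitionOfParts s).1 = (s.map fun e : ℕ+ => (e : ℕ)).sum := rfl

lemma partitionOfParts_fst_eq_zero_iff {s : Multiset ℕ+} : (partitionOfParts s).1 = 0 ↔ s = 0 := by
  simp [partitionOfParts_fst, Multiset.sum_eq_zero_iff, Multiset.eq_zero_iff_forall_notMem]

lemma partitionOfParts_bijective : Function.Bijective partitionOfParts := by
  refine ⟨fun s t h => ?_, ?_⟩
  · have hparts : s.map (fun e : ℕ+ => (e : ℕ)) = t.map fun e : ℕ+ => (e : ℕ) :=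
      congrArg (fun p : Σ m : ℕ, m.Partition => p.2.parts) h
    exact Multiset.map_injective PNat.coe_injective hparts
  · rintro ⟨m, parts, parts_pos, rfl⟩
    lift parts to Multiset ℕ+ using fun _ => parts_pos
    exact ⟨parts, rfl⟩

variable {X V : Type*} {π : X → V}

/-- The partition-valued function on `X` whose value at `x` has as parts the `e` with
`(π x, e) ∈ s`, counted with multiplicity. -/
noncomputable def coloring (π : X → V) (s : Multiset (V × ℕ+)) (x : X) : Σ m : ℕ, m.Partition :=
  partitionOfParts (curryMultiset s (π x))

lemma coloring_injective (hπ : Function.Surjective π) : Function.Injective (coloring π) :=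
  fun _ _ h => curryMultiset.injective <| Finsupp.ext <| hπ.forall.2 fun x =>
    partitionOfParts_bijective.injective (congrFun h x)

lemma finite_setOf_coloring_fst_ne_zero (hfiber : ∀ v, (π ⁻¹' {v}).Finite)
    (s : Multiset (V × ℕ+)) : {x | (coloring π s x).1 ≠ 0}.Finite := by
  refine ((curryMultiset s).hasFiniteSupport.preimage' fun v _ => hfiber v).subset fun x hx => ?_
  exact fun h => hx (partitionOfParts_fst_eq_zero_iff.2 h)

lemma exists_coloring_eq (hπ : Function.Surjective π) {Λ : X → Σ m : ℕ, m.Partition}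
    (hfin : {x | (Λ x).1 ≠ 0}.Finite) (hconst : ∀ x y, π x = π y → Λ x = Λ y) :
    ∃ s, coloring π s = Λ := by
  obtain ⟨r, hr⟩ := hπ.hasRightInverse
  choose parts hparts using fun v => partitionOfParts_bijective.surjective (Λ (r v))
  have hsupport : parts.support.Finite := by
    refine (hfin.image π).subset fun v hv => ⟨r v, ?_, hr v⟩
    rwa [Set.mem_ofPred_eq, ← hparts, Ne, partitionOfParts_fst_eq_zero_iff]
  refine ⟨curryMultiset.symm (Finsupp.ofSupportFinite parts hsupport), funext fun x => ?_⟩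
  rw [coloring, AddEquiv.apply_symm_apply]
  exact (hparts _).trans (hconst _ _ (hr _))

lemma finsum_coloring_fst (hfiber : ∀ v, (π ⁻¹' {v}).Finite) (s : Multiset (V × ℕ+)) :
    ∑ᶠ x, (coloring π s x).1 = weightedSize (fun v => (π ⁻¹' {v}).ncard) s := by
  classical
  induction s using Multiset.induction_on with
  | empty => simp [coloring, partitionOfParts_fst, weightedSize]
  | cons a s ih =>
    have hcons (x : X) : (coloring π (a ::ₘ s) x).1 =
        (π ⁻¹' {a.1}).indicator (fun _ => (a.2 : ℕ)) x + (coloring π s x).1 := by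
      simp only [coloring, partitionOfParts_fst, sum_map_curryMultiset_apply]
      simp [Set.indicator_apply, eq_comm]
    have hfiber_sum : ∑ᶠ x, (π ⁻¹' {a.1}).indicator (fun _ => (a.2 : ℕ)) x =
        a.2 * (π ⁻¹' {a.1}).ncard := by
      rw [← finsum_mem_def, finsum_mem_eq_finite_toFinset_sum _ (hfiber _), Finset.sum_const,
        Set.ncard_eq_toFinset_card _ (hfiber _), smul_eq_mul, mul_comm]
    rw [finsum_congr hcons, finsum_add_distrib ((hfiber a.1).subset Set.support_indicator_subset)
      (finite_setOf_coloring_fst_ne_zero hfiber s), hfiber_sum, ih]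
    simp [weightedSize]

theorem nonempty_weightedSize_equiv_coloring (hπ : Function.Surjective π)
    (hfiber : ∀ v, (π ⁻¹' {v}).Finite) (n : ℕ) :
    Nonempty ({s // weightedSize (fun v => (π ⁻¹' {v}).ncard) s = n} ≃
      {Λ : X → Σ m : ℕ, m.Partition // {x | (Λ x).1 ≠ 0}.Finite ∧
        (∀ x y, π x = π y → Λ x = Λ y) ∧ ∑ᶠ x, (Λ x).1 = n}) := by
  let toColoring (s : {s // weightedSize (fun v => (π ⁻¹' {v}).ncard) s = n}) :
      {Λ : X → Σ m : ℕ, m.Partition // {x | (Λ x).1 ≠ 0}.Finite ∧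
        (∀ x y, π x = π y → Λ x = Λ y) ∧ ∑ᶠ x, (Λ x).1 = n} :=
    ⟨coloring π s, finite_setOf_coloring_fst_ne_zero hfiber s,
      fun _ _ h => congrArg (fun v => partitionOfParts (curryMultiset s.1 v)) h,
      (finsum_coloring_fst hfiber s).trans s.2⟩
  refine ⟨Equiv.ofBijective toColoring
    ⟨fun s t h => Subtype.ext (coloring_injective hπ (congrArg Subtype.val h)), ?_⟩⟩
  rintro ⟨Λ, hfin, hconst, rfl⟩
  obtain ⟨s, rfl⟩ := exists_coloring_eq hπ hfin hconst
  exact ⟨⟨s, (finsum_coloring_fst hfiber s).symm⟩, rfl⟩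

end Colorings

section Places

variable {F K : Type*} [Field F] [Field K] [Algebra F K] [Algebra.IsAlgebraic F K]

variable (F) in
/-- The prime ideal of `F[X]` of the polynomials vanishing at `x`. -/
noncomputable def place (x : K) : HeightOneSpectrum F[X] where
  asIdeal := RingHom.ker (aeval (R := F) x)
  isPrime := RingHom.ker_isPrime _
  ne_bot := by
    rw [minpoly.ker_aeval_eq_span_minpoly, Ne, Ideal.span_singleton_eq_bot]
    exact minpoly.ne_zero (Algebra.IsIntegral.isIntegral x)

lemma place_eq_iff {x : K} {v : HeightOneSpectrum F[X]} {p : F[X]}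
    (hv : v.asIdeal = Ideal.span {p}) : place F x = v ↔ aeval x p = 0 := by
  rw [← RingHom.mem_ker, ← Ideal.span_singleton_le_iff_mem, ← hv]
  refine ⟨fun h => h ▸ le_rfl, fun h => HeightOneSpectrum.ext ?_⟩
  exact (v.isMaximal.eq_of_le (place F x).isPrime.ne_top h).symm

lemma preimage_place_eq_rootSet {v : HeightOneSpectrum F[X]} {p : F[X]} (hp : p ≠ 0)
    (hv : v.asIdeal = Ideal.span {p}) : place F (K := K) ⁻¹' {v} = p.rootSet K :=
  Set.ext fun _ => (place_eq_iff hv).trans (mem_rootSet_of_ne hp).symm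

lemma finite_preimage_place (v : HeightOneSpectrum F[X]) : (place F (K := K) ⁻¹' {v}).Finite := by
  obtain ⟨p, hp, hv⟩ := exists_irreducible_asIdeal_eq v
  rw [preimage_place_eq_rootSet hp.ne_zero hv]
  exact rootSet_finite p K

variable [IsAlgClosed K]

lemma place_surjective : Function.Surjective (place F (K := K)) := fun v => by
  obtain ⟨p, hp, hv⟩ := exists_irreducible_asIdeal_eq v
  obtain ⟨x, hx⟩ := IsAlgClosed.exists_aeval_eq_zero K p hp.degree_pos.ne'
  exact ⟨x, (place_eq_iff hv).2 hx⟩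

lemma ncard_preimage_place [PerfectField F] (v : HeightOneSpectrum F[X]) :
    (place F (K := K) ⁻¹' {v}).ncard = residueDegree v := by
  obtain ⟨p, hp, hv⟩ := exists_irreducible_asIdeal_eq v
  rw [preimage_place_eq_rootSet hp.ne_zero hv, residueDegree, hv,
    finrank_quotient_span_eq_natDegree, ← Nat.card_coe_set_eq, Nat.card_eq_fintype_card,
    card_rootSet_eq_natDegree (PerfectField.separable_of_irreducible hp) (IsAlgClosed.splits _)]

end Places

lemma place_eq_place_iff {F K : Type*} [Field F] [Field K] [Algebra F K] [Normal F K] {x y : K} :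
    place F x = place F y ↔ ∃ σ : K ≃ₐ[F] K, σ x = y := by
  rw [place_eq_iff (minpoly.ker_aeval_eq_span_minpoly F y),
    ← isConjRoot_iff_aeval_eq_zero (Algebra.IsIntegral.isIntegral y),
    isConjRoot_iff_exists_algEquiv]

section FiniteField

variable {F K : Type*} [Field F] [Fintype F] [Field K] [Algebra F K] [Algebra.IsAlgebraic F K]

lemma exists_algEquiv_apply_eq_pow (σ : K ≃ₐ[F] K) (x : K) :
    ∃ i : ℕ, σ x = x ^ Fintype.card F ^ i := by
  let E := IntermediateField.adjoin F {x}
  have : FiniteDimensional F E :=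
    IntermediateField.adjoin.finiteDimensional (Algebra.IsIntegral.isIntegral x)
  have : Finite E := Module.finite_of_finite F
  obtain ⟨i, hi⟩ :=
    (FiniteField.bijective_frobeniusAlgEquivOfAlgebraic_pow F E).2 (σ.restrictNormal E)
  have hgen := σ.restrictNormal_commutes E (IntermediateField.AdjoinSimple.gen F x)
  rw [← hi, AlgEquiv.coe_pow, FiniteField.coe_frobeniusAlgEquivOfAlgebraic_iterate, map_pow] at hgen
  exact ⟨i, hgen.symm⟩

lemma forall_apply_pow_card_eq_iff {α : Type*} {Λ : K → α} :
    (∀ x, Λ (x ^ Fintype.card F) = Λ x) ↔ ∀ (σ : K ≃ₐ[F] K) (x : K), Λ (σ x) = Λ x := by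
  refine ⟨fun h σ x => ?_, fun h => h (FiniteField.frobeniusAlgEquivOfAlgebraic F K)⟩
  have hiterate (i : ℕ) : Λ (x ^ Fintype.card F ^ i) = Λ x := by
    induction i with
    | zero => rw [pow_zero, pow_one]
    | succ i ih => rw [pow_succ, pow_mul, h, ih]
  obtain ⟨i, hi⟩ := exists_algEquiv_apply_eq_pow σ x
  rw [hi, hiterate]

end FiniteField

end SimilarityClasses

open SimilarityClasses

theorem similarity_classes_eq_card_colorings_general (F K ι : Type*) [Field F] [PerfectField F]
    [Field K] [Algebra F K] [IsAlgClosure F K] [Fintype ι] [DecidableEq ι] :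
    Nonempty ((Set.range fun A : Matrix ι ι F =>
        {B : Matrix ι ι F | ∃ g : Matrix.GeneralLinearGroup ι F, g.val * A * g⁻¹.val = B}) ≃
      {Λ : K → Σ m : ℕ, m.Partition // {x | (Λ x).1 ≠ 0}.Finite ∧
        (∀ (σ : K ≃ₐ[F] K) (x : K), Λ (σ x) = Λ x) ∧ ∑ᶠ x, (Λ x).1 = Fintype.card ι}) := by
  have : IsAlgClosed K := IsAlgClosure.isAlgClosed F
  have hconst (Λ : K → Σ m : ℕ, m.Partition) :
      (∀ x y, place F x = place F y → Λ x = Λ y) ↔ ∀ (σ : K ≃ₐ[F] K) (x : K), Λ (σ x) = Λ x := by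
    simp only [place_eq_place_iff]
    exact ⟨fun h σ x => (h x _ ⟨σ, rfl⟩).symm, fun h x _ ⟨σ, hσ⟩ => hσ ▸ (h σ x).symm⟩
  obtain ⟨φ⟩ := nonempty_similarityClass_equiv F ι
  obtain ⟨ψ⟩ := nonempty_weightedSize_equiv_coloring (place_surjective (F := F) (K := K))
    finite_preimage_place (Fintype.card ι)
  simp only [ncard_preimage_place, hconst] at ψ
  exact ⟨φ.trans ψ⟩

/-- **Similarity classes of `M_n(F_q)` as Frobenius-stable partition-valued colorings of
`K`** (Jordan decomposition): the number of orbits of the conjugation action of `GL_n(F_q)`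
on `M_n(F_q)` (encoded as the cardinality of the set of such orbits) equals the number of
functions `Λ` from `K` (an algebraic closure of `F_q`) to the set of partitions of
nonnegative integers (encoded as the sigma type `Σ m, Partition m`) that are nonempty for
only finitely many `x`, satisfy `Λ(x^q) = Λ(x)`, and have total size `n`. -/
theorem similarity_classes_eq_card_colorings (F : Type*) [Field F] [Fintype F]
    (q : ℕ) (hq : Fintype.card F = q) (n : ℕ) (hn : 1 ≤ n) :
    Nat.card ↥(Set.range fun A : Matrix (Fin n) (Fin n) F =>
        {B : Matrix (Fin n) (Fin n) F | ∃ g : Matrix.GeneralLinearGroup (Fin n) F,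
          (g : Matrix (Fin n) (Fin n) F) * A * ((g⁻¹ : Matrix.GeneralLinearGroup (Fin n) F) :
            Matrix (Fin n) (Fin n) F) = B}) =
      Nat.card {Λ : AlgebraicClosure F → Σ m : ℕ, m.Partition //
        {x : AlgebraicClosure F | (Λ x).1 ≠ 0}.Finite ∧
        (∀ x : AlgebraicClosure F, Λ (x ^ q) = Λ x) ∧
        ∑ᶠ x : AlgebraicClosure F, (Λ x).1 = n} := by
  subst hq
  simpa only [forall_apply_pow_card_eq_iff (F := F), Fintype.card_fin] using Nat.card_congr
    (similarity_classes_eq_card_colorings_general F (AlgebraicClosure F) (Fin n)).some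
end
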